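/- arXiv:1504.04069 — 3 statements merged into one kernel-verified Lean document; each statement's English description precedes it below -/
import Mathlib

section
/- Fix integers n ≥ 2 and 1 ≤ d ≤ n, and let G be the band graph on vertices {1,…,n} with bandwidth d, i.e., (i,j) is an edge if and only if i ≠ j and |i−j| ≤ d. Then CE_H(G) = CE_H^ψ(G) = CE_H^φ(G) = min(d, n−2). -/
open Set Matrix

noncomputable section

/-- Entrywise power function `x ↦ x^α` on nonnegative reals, with the convention `0^α := 0`. -/
def powEnt (α x : ℝ) : ℝ := if x = 0 then 0 else x ^ α

/-- The odd extension `ψ_α(x) = sgn(x)|x|^α` of the power function, with `ψ_α(0) = 0`. -/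
def psiF (α x : ℝ) : ℝ := Real.sign x * |x| ^ α

/-- The even extension `φ_α(x) = |x|^α` of the power function, with `φ_α(0) = 0`. -/
def phiF (α x : ℝ) : ℝ := if x = 0 then 0 else |x| ^ α

/-- `P_G(I)`: positive semidefinite matrices with entries in `I` and zeros outside
the edge pattern of `G`. -/
def PsetG {V : Type*} [Fintype V] (G : SimpleGraph V) (I : Set ℝ) :
    Set (Matrix V V ℝ) :=
  {A | A.PosSemidef ∧ (∀ i j, A i j ∈ I) ∧ ∀ i j, i ≠ j → ¬ G.Adj i j → A i j = 0}

/-- `H_G`: the set of entrywise powers preserving `P_G([0,∞))`. -/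
def HsetG {V : Type*} [Fintype V] (G : SimpleGraph V) : Set ℝ :=
  {α | ∀ A ∈ PsetG G (Ici (0 : ℝ)), A.map (powEnt α) ∈ PsetG G univ}

/-- `H_G^ψ`: the set of powers `α` such that `ψ_α` preserves `P_G(ℝ)`. -/
def HsetPsi {V : Type*} [Fintype V] (G : SimpleGraph V) : Set ℝ :=
  {α | ∀ A ∈ PsetG G univ, A.map (psiF α) ∈ PsetG G univ}

/-- `H_G^φ`: the set of powers `α` such that `φ_α` preserves `P_G(ℝ)`. -/
def HsetPhi {V : Type*} [Fintype V] (G : SimpleGraph V) : Set ℝ :=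
  {α | ∀ A ∈ PsetG G univ, A.map (phiF α) ∈ PsetG G univ}

/-- The set of which the critical exponent is the least element:
all `α` such that every `β ≥ α` lies in `H`. -/
def CEset (H : Set ℝ) : Set ℝ := {α | ∀ β, α ≤ β → β ∈ H}

/-- The positive integers, as a set of reals. -/
def posNats : Set ℝ := {x | ∃ k : ℕ, 0 < k ∧ x = k}

/-- The odd positive integers `−1+2ℕ`, as a set of reals. -/
def oddNats : Set ℝ := {x | ∃ k : ℕ, 0 < k ∧ x = 2 * k - 1}

/-- The even positive integers `2ℕ`, as a set of reals. -/
def evenNats : Set ℝ := {x | ∃ k : ℕ, 0 < k ∧ x = 2 * k}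

section PosSemidef

variable {V : Type*} [Fintype V]

lemma posSemidef_iff_sum_nonneg (A : Matrix V V ℝ) :
    A.PosSemidef ↔ (∀ i j, A i j = A j i) ∧ ∀ x : V → ℝ, 0 ≤ ∑ i, ∑ j, x i * x j * A i j := by
  rw [posSemidef_iff_dotProduct_mulVec]
  refine and_congr ⟨fun h i j => by simpa using (h.apply i j).symm,
    fun h => IsHermitian.ext fun i j => by simpa using h j i⟩ (forall_congr' fun x => ?_)
  simp only [dotProduct, mulVec, Finset.mul_sum, star_trivial]
  simp only [mul_comm, mul_left_comm]

lemma posSemidef_of_rankOne (u : V → ℝ) : (of fun i j => u i * u j).PosSemidef := by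
  simpa [vecMulVec] using posSemidef_vecMulVec_self_star (R := ℝ) u

/-- Restriction of a matrix to `s × s`, extended by zero. -/
def restrictTo [DecidableEq V] (s : Finset V) (A : Matrix V V ℝ) : Matrix V V ℝ :=
  of fun i j => if i ∈ s ∧ j ∈ s then A i j else 0

lemma Matrix.PosSemidef.restrictTo [DecidableEq V] {A : Matrix V V ℝ} (hA : A.PosSemidef)
    (s : Finset V) : (restrictTo s A).PosSemidef := by
  have h : _root_.restrictTo s A = A ⊙ of fun i j =>
      (if i ∈ s then (1 : ℝ) else 0) * if j ∈ s then (1 : ℝ) else 0 := by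
    ext i j
    by_cases hi : i ∈ s <;> by_cases hj : j ∈ s <;> simp [_root_.restrictTo, hi, hj]
  rw [h]
  exact hA.hadamard (posSemidef_of_rankOne _)

lemma posSemidef_sub_of_hasDerivAt {F F' : ℝ → Matrix V V ℝ}
    (hsymm : ∀ t i j, F t i j = F t j i)
    (hF : ∀ t i j, HasDerivAt (fun t => F t i j) (F' t i j) t)
    (hpos : ∀ t, 0 ≤ t → (F' t).PosSemidef) : (F 1 - F 0).PosSemidef := by
  rw [posSemidef_iff_sum_nonneg]
  refine ⟨fun i j => by simp [hsymm 1 i j, hsymm 0 i j], fun x => ?_⟩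
  have hder : ∀ t, HasDerivAt (fun t => ∑ i, ∑ j, x i * x j * F t i j)
      (∑ i, ∑ j, x i * x j * F' t i j) t := fun t =>
    HasDerivAt.fun_sum fun i _ => HasDerivAt.fun_sum fun j _ => (hF t i j).const_mul _
  have hmono : MonotoneOn (fun t => ∑ i, ∑ j, x i * x j * F t i j) (Ici 0) := by
    refine monotoneOn_of_deriv_nonneg (convex_Ici 0)
      (fun t _ => (hder t).continuousAt.continuousWithinAt)
      (fun t _ => (hder t).differentiableAt.differentiableWithinAt) fun t ht => ?_
    rw [(hder t).deriv]
    rw [interior_Ici] at ht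
    exact ((posSemidef_iff_sum_nonneg _).1 (hpos t (le_of_lt ht))).2 x
  have h01 := hmono (mem_Ici.2 le_rfl) (mem_Ici.2 zero_le_one) zero_le_one
  simp only [Matrix.sub_apply, mul_sub, Finset.sum_sub_distrib]
  linarith

lemma Matrix.PosSemidef.sq_le_mul {A : Matrix V V ℝ} (hA : A.PosSemidef) (v : V) (x : V → ℝ) :
    (∑ i, x i * A i v) ^ 2 ≤ A v v * ∑ i, ∑ j, x i * x j * A i j := by
  classical
  obtain ⟨hs, hq⟩ := (posSemidef_iff_sum_nonneg A).1 hA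
  have key : ∀ t : ℝ, 0 ≤ A v v * (t * t) + (2 * ∑ i, x i * A i v) * t
      + ∑ i, ∑ j, x i * x j * A i j := by
    intro t
    refine (hq fun i => x i + t * if i = v then 1 else 0).trans_eq ?_
    have h1 : ∀ i j, (x i + t * if i = v then 1 else 0) * (x j + t * if j = v then 1 else 0) * A i j
        = x i * x j * A i j + (if j = v then t * (x i * A i j) else 0)
          + (if i = v then t * (x j * A i j) else 0)
          + (if i = v then (if j = v then t * t * A i j else 0) else 0) := by
      intro i j
      split_ifs <;> ring
    simp only [h1, Finset.sum_add_distrib, Finset.sum_ite_eq', Finset.mem_univ, if_true]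
    rw [Finset.sum_comm (f := fun i j => if i = v then t * (x j * A i j) else 0)]
    simp only [Finset.sum_ite_irrel, Finset.sum_const_zero, Finset.sum_ite_eq', Finset.mem_univ,
      if_true, hs v, ← Finset.mul_sum]
    ring
  have := discrim_le_zero key
  rw [discrim] at this
  linarith

/-- The column of `A` at `v`, normalized so that its outer square has the same `v`-th column. -/
def pivotVec (A : Matrix V V ℝ) (v : V) : V → ℝ := fun i => A i v / √(A v v)

/-- The Schur complement of the `v`-th diagonal entry, extended by zero. -/
def pivotCompl (A : Matrix V V ℝ) (v : V) : Matrix V V ℝ :=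
  of fun i j => A i j - pivotVec A v i * pivotVec A v j

lemma pivotVec_mul_pivotVec {W : Type*} {A : Matrix W W ℝ} (hA : A.PosSemidef) (v i j : W) :
    pivotVec A v i * pivotVec A v j = A i v * A j v / A v v := by
  rw [pivotVec, pivotVec, div_mul_div_comm, Real.mul_self_sqrt hA.diag_nonneg]

lemma Matrix.PosSemidef.pivotCompl {A : Matrix V V ℝ} (hA : A.PosSemidef) (v : V) :
    (pivotCompl A v).PosSemidef := by
  obtain ⟨hs, hq⟩ := (posSemidef_iff_sum_nonneg A).1 hA
  rw [posSemidef_iff_sum_nonneg]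
  refine ⟨fun i j => by simp [_root_.pivotCompl, hs i j, mul_comm], fun x => ?_⟩
  have h : ∑ i, ∑ j, x i * x j * _root_.pivotCompl A v i j
      = ∑ i, ∑ j, x i * x j * A i j - (∑ i, x i * A i v) ^ 2 / A v v := by
    simp only [_root_.pivotCompl, of_apply, pivotVec_mul_pivotVec hA, mul_sub,
      Finset.sum_sub_distrib, sq, Finset.sum_mul_sum, Finset.sum_div]
    congr 1
    exact Finset.sum_congr rfl fun i _ => Finset.sum_congr rfl fun j _ => by ring
  rw [h, sub_nonneg]
  rcases hA.diag_nonneg (i := v) |>.eq_or_lt with h0 | h0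
  · simpa [← h0] using hq x
  · rw [div_le_iff₀' h0]
    exact hA.sq_le_mul v x

lemma Matrix.PosSemidef.sq_entry_le {A : Matrix V V ℝ} (hA : A.PosSemidef) (i j : V) :
    A i j ^ 2 ≤ A i i * A j j := by
  classical
  simpa [Pi.single_apply, mul_comm (A j j)] using hA.sq_le_mul j (Pi.single i 1)

lemma pivotVec_mul_pivotVec_self {A : Matrix V V ℝ} (hA : A.PosSemidef) (v j : V) :
    pivotVec A v v * pivotVec A v j = A v j := by
  rw [pivotVec_mul_pivotVec hA, ((posSemidef_iff_sum_nonneg A).1 hA).1 v j]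
  by_cases h0 : A v v = 0
  · have := hA.sq_entry_le j v
    rw [h0, mul_zero] at this
    simp [h0, pow_eq_zero_iff two_ne_zero |>.1 (le_antisymm this (sq_nonneg _))]
  · field_simp

lemma pivotCompl_self_left {A : Matrix V V ℝ} (hA : A.PosSemidef) (v j : V) :
    pivotCompl A v v j = 0 := by
  simp [pivotCompl, pivotVec_mul_pivotVec_self hA]

lemma pivotCompl_self_right {A : Matrix V V ℝ} (hA : A.PosSemidef) (v j : V) :
    pivotCompl A v j v = 0 := by
  rw [((posSemidef_iff_sum_nonneg _).1 (hA.pivotCompl v)).1, pivotCompl_self_left hA]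

end PosSemidef

section SignedPow

/-- The even (`e = true`) and odd (`e = false`) extensions of the power function. -/
def signedPow (e : Bool) (α x : ℝ) : ℝ := if e then phiF α x else psiF α x

lemma signedPow_zero (e : Bool) (α : ℝ) : signedPow e α 0 = 0 := by
  cases e <;> simp [signedPow, phiF, psiF]

lemma signedPow_of_pos (e : Bool) (α : ℝ) {x : ℝ} (hx : 0 < x) : signedPow e α x = x ^ α := by
  cases e <;> simp [signedPow, phiF, psiF, hx.ne', Real.sign_of_pos hx, abs_of_pos hx]

lemma signedPow_of_neg (e : Bool) (α : ℝ) {x : ℝ} (hx : x < 0) :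
    signedPow e α x = (if e then 1 else -1) * (-x) ^ α := by
  cases e <;> simp [signedPow, phiF, psiF, hx.ne, Real.sign_of_neg hx, abs_of_neg hx]

lemma signedPow_of_nonneg (e : Bool) {α x : ℝ} (hα : 0 < α) (hx : 0 ≤ x) :
    signedPow e α x = x ^ α := by
  rcases hx.eq_or_lt with rfl | hx
  · rw [signedPow_zero, Real.zero_rpow hα.ne']
  · exact signedPow_of_pos e α hx

lemma signedPow_nonneg (e : Bool) {α x : ℝ} (hx : 0 ≤ x) : 0 ≤ signedPow e α x := by
  rcases hx.eq_or_lt with rfl | hx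
  · rw [signedPow_zero]
  · rw [signedPow_of_pos e α hx]; positivity

lemma signedPow_mul (e : Bool) (α x y : ℝ) :
    signedPow e α (x * y) = signedPow e α x * signedPow e α y := by
  rcases lt_trichotomy x 0 with hx | rfl | hx
  · rcases lt_trichotomy y 0 with hy | rfl | hy
    · rw [signedPow_of_pos e α (mul_pos_of_neg_of_neg hx hy), signedPow_of_neg e α hx,
        signedPow_of_neg e α hy, ← neg_mul_neg, Real.mul_rpow (by linarith) (by linarith)]
      cases e <;> simp
    · simp [signedPow_zero]
    · rw [signedPow_of_neg e α (mul_neg_of_neg_of_pos hx hy), signedPow_of_neg e α hx,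
        signedPow_of_pos e α hy, ← neg_mul, Real.mul_rpow (by linarith) hy.le, mul_assoc]
  · simp [signedPow_zero]
  · rcases lt_trichotomy y 0 with hy | rfl | hy
    · rw [signedPow_of_neg e α (mul_neg_of_pos_of_neg hx hy), signedPow_of_pos e α hx,
        signedPow_of_neg e α hy, ← mul_neg, Real.mul_rpow hx.le (by linarith), mul_left_comm]
    · simp [signedPow_zero]
    · rw [signedPow_of_pos e α (mul_pos hx hy), signedPow_of_pos e α hx, signedPow_of_pos e α hy,
        Real.mul_rpow hx.le hy.le]

lemma abs_signedPow (e : Bool) {α : ℝ} (hα : 0 < α) (x : ℝ) : |signedPow e α x| = |x| ^ α := by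
  rcases lt_trichotomy x 0 with hx | rfl | hx
  · rw [signedPow_of_neg e α hx, abs_mul, abs_of_neg hx,
      abs_of_nonneg (Real.rpow_nonneg (by linarith) _)]
    cases e <;> simp
  · simp [signedPow_zero, Real.zero_rpow hα.ne']
  · rw [signedPow_of_pos e α hx, abs_of_pos hx, abs_of_nonneg (by positivity)]

lemma continuous_signedPow (e : Bool) (x : ℝ) : Continuous fun α => signedPow e α x := by
  rcases lt_trichotomy x 0 with hx | rfl | hx
  · simp only [signedPow_of_neg e _ hx]
    exact continuous_const.mul
      (Real.continuous_const_rpow (by linarith))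
  · simpa only [signedPow_zero] using continuous_const
  · simp only [signedPow_of_pos e _ hx]
    exact Real.continuous_const_rpow hx.ne'

lemma hasDerivAt_signedPow (e : Bool) {α : ℝ} (hα : 1 < α) (x : ℝ) :
    HasDerivAt (signedPow e α) (α * signedPow (!e) (α - 1) x) x := by
  rcases lt_trichotomy x 0 with hx | rfl | hx
  · have h : HasDerivAt (fun y : ℝ => (if e then 1 else -1) * (-y) ^ α)
        ((if e then 1 else -1) * (-1 * α * (-x) ^ (α - 1))) x :=
      ((hasDerivAt_neg x).rpow_const (Or.inl (by linarith))).const_mul _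
    rw [signedPow_of_neg _ _ hx]
    have h' : HasDerivAt (signedPow e α) ((if e then 1 else -1) * (-1 * α * (-x) ^ (α - 1))) x :=
      h.congr_of_eventuallyEq
        (by filter_upwards [Iio_mem_nhds hx] with y hy using signedPow_of_neg e α hy)
    refine h'.congr_deriv ?_
    cases e <;> simp
  · rw [signedPow_zero, mul_zero, hasDerivAt_iff_isLittleO_nhds_zero]
    simp only [zero_add, signedPow_zero, sub_zero, smul_zero]
    have h1 : (fun h : ℝ => |h| ^ α) =o[nhds 0] fun h : ℝ => h := by
      simpa [hasDerivAt_iff_isLittleO_nhds_zero, Real.zero_rpow (by linarith : α ≠ 0)]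
        using hasDerivAt_abs_rpow 0 hα
    refine (Asymptotics.isLittleO_norm_left.1 ?_)
    simpa only [Real.norm_eq_abs, abs_signedPow e (by linarith : 0 < α)] using h1
  · rw [signedPow_of_pos _ _ hx]
    exact (Real.hasDerivAt_rpow_const (Or.inl hx.ne')).congr_of_eventuallyEq
      (by filter_upwards [Ioi_mem_nhds hx] with y hy using signedPow_of_pos e α hy)

lemma signedPow_sq_le (e : Bool) {α a b c : ℝ} (hα : 0 ≤ α) (ha : 0 ≤ a) (hc : 0 ≤ c)
    (h : b ^ 2 ≤ a * c) :
    signedPow e α b ^ 2 ≤ signedPow e α a * signedPow e α c := by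
  rw [← signedPow_mul, sq, ← signedPow_mul, ← sq]
  by_cases hb : b = 0
  · simpa [hb, signedPow_zero] using signedPow_nonneg e (mul_nonneg ha hc)
  · have hb2 : 0 < b ^ 2 := by positivity
    rw [signedPow_of_pos _ _ hb2, signedPow_of_pos _ _ (hb2.trans_le h)]
    exact Real.rpow_le_rpow hb2.le h hα

end SignedPow

section Preservation

variable {V : Type*} [Fintype V]

lemma posSemidef_map_signedPow_of_forall_gt {e : Bool} {α : ℝ} {A : Matrix V V ℝ}
    (h : ∀ β, α < β → (A.map (signedPow e β)).PosSemidef) :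
    (A.map (signedPow e α)).PosSemidef := by
  rw [posSemidef_iff_sum_nonneg]
  constructor
  · intro i j
    have hs : ∀ β ∈ Ioi α, signedPow e β (A i j) = signedPow e β (A j i) := fun β hβ =>
      ((posSemidef_iff_sum_nonneg _).1 (h β hβ)).1 i j
    refine EqOn.closure (s := Ioi α) hs (continuous_signedPow e _) (continuous_signedPow e _) ?_
    simp [closure_Ioi]
  · intro x
    have hc : Continuous fun β => ∑ i, ∑ j, x i * x j * signedPow e β (A i j) :=
      continuous_finsetSum _ fun i _ => continuous_finsetSum _ fun j _ =>
        continuous_const.mul (continuous_signedPow e _)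
    have hcl : closure (Ioi α) ⊆ {β | 0 ≤ ∑ i, ∑ j, x i * x j * signedPow e β (A i j)} :=
      closure_minimal (fun β hβ => ((posSemidef_iff_sum_nonneg _).1 (h β hβ)).2 x)
        (isClosed_le continuous_const hc)
    exact hcl (by simp [closure_Ioi])

lemma map_signedPow_rankOne_posSemidef (e : Bool) (α : ℝ) (u : V → ℝ) :
    ((of fun i j => u i * u j).map (signedPow e α)).PosSemidef := by
  convert posSemidef_of_rankOne fun i => signedPow e α (u i) using 1
  ext i j
  simp [signedPow_mul]

variable [DecidableEq V]

/-- Powers `α` for which both extensions preserve positivity of matrices supported on a set of at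
most `r` indices. -/
def PreservesOnCard (V : Type*) [Fintype V] (r : ℕ) (α : ℝ) : Prop :=
  ∀ (e : Bool) (s : Finset V) (A : Matrix V V ℝ), s.card ≤ r → A.PosSemidef →
    (∀ i j, ¬ (i ∈ s ∧ j ∈ s) → A i j = 0) → (A.map (signedPow e α)).PosSemidef

lemma hadamard_map_signedPow_posSemidef {r : ℕ} {α : ℝ} (h : PreservesOnCard V r α) (e : Bool)
    {s : Finset V} (hs : s.card ≤ r) {B X : Matrix V V ℝ} (hB : B.PosSemidef)
    (hX : X.PosSemidef) (hBs : ∀ i j, ¬ (i ∈ s ∧ j ∈ s) → B i j = 0) :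
    (B ⊙ X.map (signedPow e α)).PosSemidef := by
  have heq : B ⊙ X.map (signedPow e α) = B ⊙ (restrictTo s X).map (signedPow e α) := by
    ext i j
    by_cases hij : i ∈ s ∧ j ∈ s
    · simp [restrictTo, hij]
    · simp [hBs i j hij]
  rw [heq]
  exact hB.hadamard (h e s _ hs (hX.restrictTo s) fun i j hij => by simp [restrictTo, hij])

lemma map_signedPow_add_sub_posSemidef {r : ℕ} {α : ℝ} (hα : 1 < α)
    (h : PreservesOnCard V r (α - 1)) (e : Bool) {s : Finset V} (hs : s.card ≤ r)
    {B X : Matrix V V ℝ} (hB : B.PosSemidef) (hX : X.PosSemidef)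
    (hBs : ∀ i j, ¬ (i ∈ s ∧ j ∈ s) → B i j = 0) :
    ((X + B).map (signedPow e α) - X.map (signedPow e α)).PosSemidef := by
  have key := posSemidef_sub_of_hasDerivAt
    (F := fun t => (X + t • B).map (signedPow e α))
    (F' := fun t => α • (B ⊙ (X + t • B).map (signedPow (!e) (α - 1)))) ?_ ?_ ?_
  · simpa using key
  · intro t i j
    simp [((posSemidef_iff_sum_nonneg X).1 hX).1 i j, ((posSemidef_iff_sum_nonneg B).1 hB).1 i j]
  · intro t i j
    have h1 : HasDerivAt (fun t : ℝ => X i j + t * B i j) (B i j) t := by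
      simpa using ((hasDerivAt_id t).mul_const (B i j)).const_add (X i j)
    have h2 := (hasDerivAt_signedPow e hα (X i j + t * B i j)).comp t h1
    refine h2.congr_deriv ?_
    simp
    ring
  · intro t ht
    exact (hadamard_map_signedPow_posSemidef h _ hs hB (hX.add (hB.smul ht)) hBs).smul
      (by linarith)

lemma preservesOnCard_two {α : ℝ} (hα : 0 ≤ α) : PreservesOnCard V 2 α := by
  intro e s A hs hA hAs
  rw [posSemidef_iff_sum_nonneg]
  have hsymm := ((posSemidef_iff_sum_nonneg A).1 hA).1
  refine ⟨fun i j => by simp [hsymm i j], fun x => ?_⟩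
  have hsum : ∑ i, ∑ j, x i * x j * A.map (signedPow e α) i j
      = ∑ i ∈ s, ∑ j ∈ s, x i * x j * signedPow e α (A i j) := by
    rw [← Finset.sum_subset (Finset.subset_univ s)]
    · refine Finset.sum_congr rfl fun i _ => (Finset.sum_subset (Finset.subset_univ s) ?_).symm
      intro j _ hj
      simp [hAs i j (by tauto), signedPow_zero]
    · intro i _ hi
      exact Finset.sum_eq_zero fun j _ => by simp [hAs i j (by tauto), signedPow_zero]
  rw [hsum]
  have hcases : s.card = 0 ∨ s.card = 1 ∨ s.card = 2 := by omega
  rcases hcases with h | h | h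
  · simp [Finset.card_eq_zero.1 h]
  · obtain ⟨a, rfl⟩ := Finset.card_eq_one.1 h
    simpa using mul_nonneg (mul_self_nonneg (x a)) (signedPow_nonneg e hA.diag_nonneg)
  · obtain ⟨a, b, hab, rfl⟩ := Finset.card_eq_two.1 h
    simp only [Finset.sum_pair hab, hsymm b a]
    have hp := signedPow_nonneg e (α := α) (hA.diag_nonneg (i := a))
    have hr := signedPow_nonneg e (α := α) (hA.diag_nonneg (i := b))
    have hq := signedPow_sq_le e hα hA.diag_nonneg hA.diag_nonneg (hA.sq_entry_le a b)
    generalize signedPow e α (A a a) = p at *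
    generalize signedPow e α (A b b) = r at *
    generalize signedPow e α (A a b) = q at *
    rcases hp.eq_or_lt with rfl | hp
    · have : q = 0 := by nlinarith
      subst this
      nlinarith [mul_nonneg (mul_self_nonneg (x b)) hr]
    · refine nonneg_of_mul_nonneg_right (a := p) ?_ hp
      nlinarith [sq_nonneg (p * x a + q * x b), mul_nonneg (sq_nonneg (x b)) (sub_nonneg.2 hq)]

lemma preservesOnCard_of_le (m : ℕ) {α : ℝ} (hα : m ≤ α) : PreservesOnCard V (m + 2) α := by
  induction m generalizing α with
  | zero => exact preservesOnCard_two (by simpa using hα)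
  | succ m ih =>
    intro e s A hs hA hAs
    refine posSemidef_map_signedPow_of_forall_gt fun β hβ => ?_
    push_cast at hα
    have hm : (0 : ℝ) ≤ m := m.cast_nonneg
    rcases s.eq_empty_or_nonempty with rfl | ⟨v, hv⟩
    · have : A = 0 := by ext i j; exact hAs i j (by simp)
      rw [this]
      convert PosSemidef.zero (n := V) (R := ℝ)
      ext i j
      simp [signedPow_zero]
    · have hAeq : A = (of fun i j => pivotVec A v i * pivotVec A v j) + pivotCompl A v := by
        ext i j; simp [pivotCompl]
      have hmono := map_signedPow_add_sub_posSemidef (by linarith : 1 < β)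
        (ih (by linarith : (m : ℝ) ≤ β - 1)) e (s := s.erase v)
        (by rw [Finset.card_erase_of_mem hv]; omega) (hA.pivotCompl v)
        (posSemidef_of_rankOne (pivotVec A v)) ?_
      · have := hmono.add (map_signedPow_rankOne_posSemidef e β (pivotVec A v))
        rwa [sub_add_cancel, ← hAeq] at this
      · intro i j hij
        by_cases hi : i = v
        · rw [hi, pivotCompl_self_left hA]
        by_cases hj : j = v
        · rw [hj, pivotCompl_self_right hA]
        have hij' : ¬ (i ∈ s ∧ j ∈ s) := by simpa [hi, hj] using hij
        have hz : A i v = 0 ∨ A j v = 0 := by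
          by_cases his : i ∈ s
          · exact Or.inr (hAs j v (by tauto))
          · exact Or.inl (hAs i v (by tauto))
        rcases hz with hz | hz <;> simp [pivotCompl, hAs i j hij', pivotVec, hz]

lemma signedPow_superadditive_of_card_le_one (e : Bool) {W : Type*} [DecidableEq W] {α : ℝ} (hα : 1 ≤ α)
    {s : Finset W}
    (hs : s.card ≤ 1) {B C : Matrix W W ℝ} (hB : B.PosSemidef) (hC : C.PosSemidef)
    (hCs : ∀ i j, ¬ (i ∈ s ∧ j ∈ s) → C i j = 0) :
    ((B + C).map (signedPow e α) - B.map (signedPow e α) - C.map (signedPow e α)).PosSemidef := by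
  have heq : (B + C).map (signedPow e α) - B.map (signedPow e α) - C.map (signedPow e α)
      = diagonal fun i => signedPow e α (B i i + C i i) - signedPow e α (B i i)
        - signedPow e α (C i i) := by
    ext i j
    by_cases hij : i = j
    · subst hij; simp
    · have : C i j = 0 := hCs i j fun h => hij (Finset.card_le_one.1 hs i h.1 j h.2)
      simp [hij, this, signedPow_zero]
  rw [heq]
  refine PosSemidef.diagonal fun i => ?_
  have hb := hB.diag_nonneg (i := i)
  have hc := hC.diag_nonneg (i := i)
  have h0 : 0 < α := by linarith
  simp only [Pi.zero_apply]
  rw [signedPow_of_nonneg e h0 hb, signedPow_of_nonneg e h0 hc,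
    signedPow_of_nonneg e h0 (add_nonneg hb hc)]
  linarith [Real.add_rpow_le_rpow_add hb hc hα]

lemma signedPow_superadditive (e : Bool) {α : ℝ} {d : ℕ} (hd : 1 ≤ d) (hα : d < α) {s : Finset V}
    (hs : s.card ≤ d) {B C : Matrix V V ℝ} (hB : B.PosSemidef) (hC : C.PosSemidef)
    (hCs : ∀ i j, ¬ (i ∈ s ∧ j ∈ s) → C i j = 0) :
    ((B + C).map (signedPow e α) - B.map (signedPow e α) - C.map (signedPow e α)).PosSemidef := by
  have hd' : (1 : ℝ) ≤ d := by exact_mod_cast hd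
  obtain rfl | ⟨m, rfl⟩ : d = 1 ∨ ∃ m, d = m + 2 := by
    rcases hd.eq_or_lt with h | h
    · exact Or.inl h.symm
    · exact Or.inr ⟨d - 2, by omega⟩
  · exact signedPow_superadditive_of_card_le_one e (hd'.trans hα.le) hs hB hC hCs
  push_cast at hα
  have hm : (0 : ℝ) ≤ m := m.cast_nonneg
  have hpres : PreservesOnCard V (m + 2) (α - 1 - 1) := preservesOnCard_of_le m (by linarith)
  have key := posSemidef_sub_of_hasDerivAt
    (F := fun t => (B + t • C).map (signedPow e α) - (t • C).map (signedPow e α))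
    (F' := fun t => α • (C ⊙ ((t • C + restrictTo s B).map (signedPow (!e) (α - 1))
      - (t • C).map (signedPow (!e) (α - 1))))) ?_ ?_ ?_
  · have h0 : (0 : Matrix V V ℝ).map (signedPow e α) = 0 := by
      ext i j; simp [signedPow_zero]
    convert key using 1
    simp only [one_smul, zero_smul, add_zero, h0]
    abel
  · intro t i j
    simp [((posSemidef_iff_sum_nonneg B).1 hB).1 i j, ((posSemidef_iff_sum_nonneg C).1 hC).1 i j]
  · intro t i j
    have h0 : HasDerivAt (fun t : ℝ => t * C i j) (C i j) t := by
      simpa using (hasDerivAt_id t).mul_const (C i j)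
    have h1 : HasDerivAt (fun t : ℝ => B i j + t * C i j) (C i j) t := h0.const_add _
    have hα1 : 1 < α := by linarith
    have h2 := ((hasDerivAt_signedPow e hα1 (B i j + t * C i j)).comp t h1).sub
      ((hasDerivAt_signedPow e hα1 (t * C i j)).comp t h0)
    refine h2.congr_deriv ?_
    by_cases hij : i ∈ s ∧ j ∈ s
    · simp [restrictTo, hij, add_comm (B i j)]
      ring
    · simp [hCs i j hij]
  · intro t ht
    exact (hC.hadamard (map_signedPow_add_sub_posSemidef (by linarith) hpres (!e) hs
      (hB.restrictTo s) (hC.smul ht) fun i j hij => by simp [restrictTo, hij])).smul (by linarith)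

end Preservation

section Band

lemma map_signedPow_band_posSemidef {n d : ℕ} (hd : 1 ≤ d) (e : Bool) {α : ℝ} (hα : d < α)
    (s : Finset (Fin n)) {A : Matrix (Fin n) (Fin n) ℝ} (hA : A.PosSemidef)
    (hband : ∀ i j : Fin n, (i : ℕ) + d < j → A i j = 0)
    (hAs : ∀ i j, ¬ (i ∈ s ∧ j ∈ s) → A i j = 0) :
    (A.map (signedPow e α)).PosSemidef := by
  induction hk : s.card generalizing s A with
  | zero =>
    have : A = 0 := by ext i j; exact hAs i j (by simp [Finset.card_eq_zero.1 hk])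
    rw [this]
    convert PosSemidef.zero (n := Fin n) (R := ℝ)
    ext i j
    simp [signedPow_zero]
  | succ k ih =>
    have hne : s.Nonempty := Finset.card_pos.1 (by omega)
    set v := s.min' hne with hv
    have hvs : v ∈ s := s.min'_mem hne
    have hmin : ∀ i ∈ s, v ≤ i := fun i hi => s.min'_le i hi
    have hsymm := ((posSemidef_iff_sum_nonneg A).1 hA).1
    have hpiv_out : ∀ i, i ∉ s → pivotVec A v i = 0 := fun i hi => by
      simp [pivotVec, hAs i v (by tauto)]
    have hpiv_far : ∀ i : Fin n, (v : ℕ) + d < i → pivotVec A v i = 0 := fun i hi => by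
      simp [pivotVec, hsymm i v, hband v i hi]
    set T : Finset (Fin n) := s.filter fun i => v < i ∧ (i : ℕ) ≤ v + d with hT
    have hTcard : T.card ≤ d := by
      have : (T.map Fin.valEmbedding) ⊆ Finset.Ioc (v : ℕ) (v + d) := by
        intro i hi
        simp only [Finset.mem_map, hT, Finset.mem_filter] at hi
        obtain ⟨i, ⟨-, h1, h2⟩, rfl⟩ := hi
        simpa using ⟨h1, h2⟩
      simpa using Finset.card_le_card this
    set u : Fin n → ℝ := fun i => if i = v then 0 else pivotVec A v i with hu
    have hu_supp : ∀ i, i ∉ T → u i = 0 := by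
      intro i hi
      by_cases hiv : i = v
      · simp [hu, hiv]
      by_cases his : i ∈ s
      · have hlt : v < i := lt_of_le_of_ne (hmin i his) (Ne.symm hiv)
        have : ¬ (i : ℕ) ≤ v + d := fun h => hi (by simp [hT, his, hlt, h])
        simp [hu, hpiv_far i (by omega)]
      · simp [hu, hpiv_out i his]
    have hS := hA.pivotCompl v
    have hS_ind : ((pivotCompl A v).map (signedPow e α)).PosSemidef := by
      refine ih (s.erase v) hS ?_ ?_ (by rw [Finset.card_erase_of_mem hvs]; omega)
      · intro i j hij
        by_cases his : i ∈ s
        · have := Fin.le_def.1 (hmin i his)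
          simp [pivotCompl, hband i j hij, hpiv_far j (by omega)]
        · simp [pivotCompl, hband i j hij, hpiv_out i his]
      · intro i j hij
        by_cases hi : i = v
        · rw [hi, pivotCompl_self_left hA]
        by_cases hj : j = v
        · rw [hj, pivotCompl_self_right hA]
        have hij' : ¬ (i ∈ s ∧ j ∈ s) := by simpa [hi, hj] using hij
        have hz : pivotVec A v i = 0 ∨ pivotVec A v j = 0 := by
          by_cases his : i ∈ s
          · exact Or.inr (hpiv_out j (by tauto))
          · exact Or.inl (hpiv_out i his)
        rcases hz with hz | hz <;> simp [pivotCompl, hAs i j hij', hz]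
    have hsup := signedPow_superadditive e hd hα hTcard hS (posSemidef_of_rankOne u)
      (fun i j hij => by
        by_cases hi : i ∈ T
        · simp [hu_supp j (by tauto)]
        · simp [hu_supp i hi])
    have hall := (hsup.add hS_ind).add (map_signedPow_rankOne_posSemidef e α (pivotVec A v))
    convert hall using 1
    ext i j
    by_cases hi : i = v
    · subst hi
      simp [hu, pivotCompl_self_left hA, signedPow_zero, pivotVec_mul_pivotVec_self hA]
    by_cases hj : j = v
    · subst hj
      simp [hu, pivotCompl_self_right hA, signedPow_zero, mul_comm (pivotVec A v i),
        pivotVec_mul_pivotVec_self hA, hsymm i v]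
    simp only [hu, hi, hj, pivotCompl, map_apply, Matrix.add_apply, Matrix.sub_apply, of_apply,
      if_false, sub_add_cancel]
    ring

end Band

section Counterexample

lemma exists_one_add_rpow_approx (β : ℝ) {k : ℕ} (hk : 1 ≤ k) :
    ∃ (c : ℕ → ℝ) (C : ℝ), c 0 = 1 ∧ ∀ t ∈ Icc (0 : ℝ) 1,
      |(1 + t) ^ β - ∑ m ∈ Finset.range k, c m * t ^ m| ≤ C * t ^ k := by
  obtain ⟨k, rfl⟩ : ∃ l, k = l + 1 := ⟨k - 1, by omega⟩
  have hcd : ContDiffOn ℝ (k + 1) (fun t : ℝ => (1 + t) ^ β) (Icc 0 1) := by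
    refine ContDiffOn.rpow_const_of_ne (contDiff_const.add contDiff_id).contDiffOn fun t ht => ?_
    have := ht.1
    exact (by positivity : (0 : ℝ) < 1 + t).ne'
  obtain ⟨C, hC⟩ := exists_taylor_mean_remainder_bound zero_le_one hcd
  refine ⟨fun m => (m.factorial : ℝ)⁻¹ *
    iteratedDerivWithin m (fun t : ℝ => (1 + t) ^ β) (Icc 0 1) 0, C, by simp, fun t ht => ?_⟩
  have h := hC t ht
  rw [taylor_within_apply, Real.norm_eq_abs, sub_zero] at h
  convert h using 4 with m _
  simp only [smul_eq_mul]
  ring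

lemma exists_moment_weights {β : ℝ} {k : ℕ} (hk : 1 ≤ k) (hβ : (k : ℝ) - 1 < β) :
    ∃ v : ℕ → ℝ, (∀ m, 1 ≤ m → m < k → ∑ i ∈ Finset.range k, v i * (2 ^ i) ^ m = 0) ∧
      ∑ i ∈ Finset.range k, v i * ((2 : ℝ) ^ i) ^ β = 1 := by
  let a : Fin k → ℝ := fun j => if (j : ℕ) + 1 < k then (j : ℝ) + 1 else β
  let M := vandermonde fun j => (2 : ℝ) ^ a j
  have ha : Function.Injective a := by
    intro i j hij
    have hlt : ∀ l : Fin k, (l : ℕ) + 1 < k → (l : ℝ) + 1 < β := fun l hl => by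
      have : (l : ℝ) + 1 + 1 ≤ k := by exact_mod_cast hl
      linarith
    simp only [a] at hij
    ext
    split_ifs at hij with h1 h2 h2
    · exact_mod_cast add_right_cancel hij
    · exact absurd hij (hlt i h1).ne
    · exact absurd hij (hlt j h2).ne'
    · omega
  have hM : IsUnit M.det := by
    rw [isUnit_iff_ne_zero, det_vandermonde_ne_zero_iff]
    intro i j hij
    exact ha ((Real.rpow_right_inj (by norm_num) (by norm_num)).1 hij)
  let b : Fin k → ℝ := fun j => if (j : ℕ) + 1 < k then 0 else 1
  have hMb : M *ᵥ (M⁻¹ *ᵥ b) = b := by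
    rw [mulVec_mulVec, mul_nonsing_inv _ hM, one_mulVec]
  have hrow : ∀ j : Fin k, ∑ i ∈ Finset.range k,
      (if h : i < k then (M⁻¹ *ᵥ b) ⟨i, h⟩ else 0) * ((2 : ℝ) ^ i) ^ a j = b j := by
    intro j
    rw [← congrFun hMb j, Finset.sum_range, mulVec, dotProduct]
    refine Finset.sum_congr rfl fun i _ => ?_
    rw [dif_pos i.2, mul_comm, ← Real.rpow_natCast, ← Real.rpow_mul (by norm_num), mul_comm (i : ℝ),
      Real.rpow_mul (by norm_num), Real.rpow_natCast]
    rfl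
  refine ⟨fun i => if h : i < k then (M⁻¹ *ᵥ b) ⟨i, h⟩ else 0, fun m h1 hm => ?_, ?_⟩
  · have h := hrow ⟨m - 1, by omega⟩
    have hm1 : m - 1 + 1 < k := by omega
    have hcast : ((m - 1 : ℕ) : ℝ) + 1 = m := by exact_mod_cast Nat.sub_add_cancel h1
    simpa only [a, b, hm1, if_true, hcast, Real.rpow_natCast] using h
  · have h := hrow ⟨k - 1, by omega⟩
    have hk1 : ¬ k - 1 + 1 < k := by omega
    simpa only [a, b, hk1, if_false] using h

lemma exists_superadditivity_defect {β : ℝ} {k : ℕ} (hk : 1 ≤ k) (hβ : (k : ℝ) - 1 < β)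
    (hβk : β < k) :
    ∃ (v : ℕ → ℝ) (ε : ℝ), 0 < ε ∧ ∑ i ∈ Finset.range k, v i * ((2 : ℝ) ^ i) ^ β = 1 ∧
      ∑ i ∈ Finset.range k, ∑ j ∈ Finset.range k,
        v i * v j * ((1 + ε * (2 ^ i * 2 ^ j)) ^ β - 1) < ε ^ β := by
  obtain ⟨v, hv0, hv1⟩ := exists_moment_weights hk hβ
  obtain ⟨c, C, hc0, hC⟩ := exists_one_add_rpow_approx β hk
  set K : ℝ := ∑ i ∈ Finset.range k, ∑ j ∈ Finset.range k,
    |v i * v j| * (C * (2 ^ i * 2 ^ j) ^ k) with hK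
  have hlim : Filter.Tendsto (fun ε : ℝ => K * ε ^ ((k : ℝ) - β)) (nhdsWithin 0 (Ioi 0))
      (nhds 0) := by
    have h : ContinuousAt (fun ε : ℝ => K * ε ^ ((k : ℝ) - β)) 0 :=
      continuousAt_const.mul (Real.continuousAt_rpow_const _ _ (Or.inr (by linarith)))
    have h' := h.tendsto.mono_left (nhdsWithin_le_nhds (s := Ioi (0 : ℝ)))
    rwa [Real.zero_rpow (by linarith), mul_zero] at h'
  obtain ⟨ε, ⟨hεK, hε1⟩, hε⟩ := (((hlim.eventually_lt_const zero_lt_one).and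
    (nhdsWithin_le_nhds (Iio_mem_nhds (show (0 : ℝ) < (4 ^ k)⁻¹ by positivity)))).and
    self_mem_nhdsWithin).exists
  replace hε : 0 < ε := hε
  replace hε1 : ε < (4 ^ k)⁻¹ := hε1
  refine ⟨v, ε, hε, hv1, ?_⟩
  have hsmall : ∀ i ∈ Finset.range k, ∀ j ∈ Finset.range k,
      ε * ((2 : ℝ) ^ i * 2 ^ j) ∈ Icc (0 : ℝ) 1 := by
    intro i hi j hj
    refine ⟨by positivity, ?_⟩
    have h4 : (2 : ℝ) ^ i * 2 ^ j ≤ 4 ^ k := by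
      rw [show (4 : ℝ) = 2 * 2 by norm_num, mul_pow]
      have hi' := (Finset.mem_range.1 hi).le
      have hj' := (Finset.mem_range.1 hj).le
      gcongr <;> norm_num
    calc ε * ((2 : ℝ) ^ i * 2 ^ j) ≤ (4 ^ k)⁻¹ * 4 ^ k := by gcongr
      _ = 1 := inv_mul_cancel₀ (by positivity)
  have hpoly : ∑ i ∈ Finset.range k, ∑ j ∈ Finset.range k, v i * v j *
      (∑ m ∈ Finset.range k, c m * (ε * (2 ^ i * 2 ^ j)) ^ m - 1) = 0 := by
    obtain ⟨l, rfl⟩ : ∃ l, k = l + 1 := ⟨k - 1, by omega⟩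
    have h1 : ∀ i j, v i * v j *
        (∑ m ∈ Finset.range (l + 1), c m * (ε * ((2 : ℝ) ^ i * 2 ^ j)) ^ m - 1)
        = ∑ m ∈ Finset.range l, c (m + 1) * ε ^ (m + 1) *
          ((v i * (2 ^ i) ^ (m + 1)) * (v j * (2 ^ j) ^ (m + 1))) := by
      intro i j
      rw [Finset.sum_range_succ', hc0, pow_zero, mul_one, add_sub_cancel_right, Finset.mul_sum]
      refine Finset.sum_congr rfl fun m _ => ?_
      rw [mul_pow, mul_pow]
      ring
    simp only [h1]
    rw [Finset.sum_congr rfl fun i _ => Finset.sum_comm, Finset.sum_comm]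
    refine Finset.sum_eq_zero fun m hm => ?_
    simp only [← Finset.mul_sum, ← Finset.sum_mul]
    rw [hv0 (m + 1) (by omega) (by have := Finset.mem_range.1 hm; omega)]
    simp
  have hbound : ∑ i ∈ Finset.range k, ∑ j ∈ Finset.range k,
      v i * v j * ((1 + ε * (2 ^ i * 2 ^ j)) ^ β - 1) ≤ K * ε ^ k := by
    rw [← sub_zero (∑ i ∈ Finset.range k, _), ← hpoly, hK, Finset.sum_mul]
    simp only [← Finset.sum_sub_distrib, Finset.sum_mul]
    refine Finset.sum_le_sum fun i hi => Finset.sum_le_sum fun j hj => ?_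
    rw [← mul_sub, sub_sub_sub_cancel_right]
    refine (le_abs_self _).trans ?_
    rw [abs_mul]
    calc |v i * v j| * _ ≤ |v i * v j| * (C * (ε * (2 ^ i * 2 ^ j)) ^ k) :=
          mul_le_mul_of_nonneg_left (hC _ (hsmall i hi j hj)) (abs_nonneg _)
      _ = _ := by rw [mul_pow]; ring
  refine hbound.trans_lt ?_
  have hsplit : ε ^ k = ε ^ ((k : ℝ) - β) * ε ^ β := by
    rw [← Real.rpow_add hε, sub_add_cancel, Real.rpow_natCast]
  rw [hsplit, ← mul_assoc]
  exact mul_lt_of_lt_one_left (by positivity) hεK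

lemma sum_range_eq_ends_add_middle {k n : ℕ} (hkn : k + 2 ≤ n) {F : ℕ → ℝ}
    (hF : ∀ i, k + 1 < i → F i = 0) :
    ∑ i ∈ Finset.range n, F i = F 0 + ∑ i ∈ Finset.range k, F (i + 1) + F (k + 1) := by
  rw [← Finset.sum_subset (Finset.range_mono hkn), Finset.sum_range_succ, Finset.sum_range_succ']
  · ring
  · intro i _ hi
    exact hF i (by rw [Finset.mem_range] at hi; omega)

lemma powEnt_of_pos {α : ℝ} (hα : 0 < α) (x : ℝ) : powEnt α x = x ^ α := by
  by_cases h : x = 0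
  · simp [powEnt, h, Real.zero_rpow hα.ne']
  · simp [powEnt, h]

lemma not_mem_HsetG_of_band {n k : ℕ} (hk : 1 ≤ k) (hkn : k + 2 ≤ n) {G : SimpleGraph (Fin n)}
    (hG : ∀ i j : Fin n, i ≠ j → ((i : ℤ) - (j : ℤ)).natAbs ≤ k → G.Adj i j)
    {β : ℝ} (hβ : (k : ℝ) - 1 < β) (hβk : β < k) : β ∉ HsetG G := by
  intro hmem
  have hk' : (1 : ℝ) ≤ k := by exact_mod_cast hk
  have hβ0 : 0 < β := by linarith
  obtain ⟨v, ε, hε, hv1, hneg⟩ := exists_superadditivity_defect hk hβ hβk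
  let mid : ℕ → ℝ := fun i => if i = 0 then 0 else if i ≤ k then 1 else 0
  let u : ℕ → ℝ := fun i => if i ≤ k then 1 else 0
  let w : ℕ → ℝ := fun i =>
    if i = 0 then 0 else if i ≤ k then 2 ^ (i - 1) else if i = k + 1 then 1 else 0
  let y : ℕ → ℝ := fun i => if i = 0 then -∑ j ∈ Finset.range k, v j else
    if i ≤ k then v (i - 1) else if i = k + 1 then -1 else 0
  have hu : ∀ i, 0 ≤ u i := fun i => by simp only [u]; split_ifs <;> norm_num
  have hw : ∀ i, 0 ≤ w i := fun i => by simp only [w]; split_ifs <;> positivity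
  let A : Matrix (Fin n) (Fin n) ℝ :=
    (of fun i j : Fin n => u i * u j) + ε • of fun i j : Fin n => w i * w j
  have hA : A ∈ PsetG G (Ici 0) := by
    refine ⟨(posSemidef_of_rankOne fun i : Fin n => u i).add
      ((posSemidef_of_rankOne fun i : Fin n => w i).smul hε.le), fun i j => ?_, fun i j hij hadj => ?_⟩
    · have := hu i; have := hu j; have := hw i; have := hw j
      simp only [A, Matrix.add_apply, Matrix.smul_apply, of_apply, smul_eq_mul, mem_Ici]
      positivity
    · have hfar : ¬ ((i : ℤ) - (j : ℤ)).natAbs ≤ k := fun h => hadj (hG i j hij h)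
      have h1 : u i * u j = 0 := by
        simp only [u]; split_ifs <;> simp; omega
      have h2 : w i * w j = 0 := by
        simp only [w]; split_ifs <;> simp <;> omega
      simp [A, h1, h2]
  have hq := ((posSemidef_iff_sum_nonneg _).1 (hmem A hA).1).2 fun i => y i
  have hentry : ∀ i j : Fin n, A.map (powEnt β) i j = u i * u j
      + ε ^ β * (w i ^ β * w j ^ β) + mid i * mid j *
        ((1 + ε * (w i * w j)) ^ β - 1 - ε ^ β * (w i ^ β * w j ^ β)) := by
    intro i j
    have hwi := hw i
    have hwj := hw j
    have hA0 : A i j = u i * u j + ε * (w i * w j) := rfl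
    have hpow : (ε * (w i * w j)) ^ β = ε ^ β * (w i ^ β * w j ^ β) := by
      rw [Real.mul_rpow hε.le (by positivity), Real.mul_rpow hwi hwj]
    rw [map_apply, powEnt_of_pos hβ0, hA0]
    have hcase : ∀ l : ℕ, (mid l = 1 ∧ u l = 1) ∨ (mid l = 0 ∧ u l = 0) ∨ (mid l = 0 ∧ w l = 0) := by
      intro l
      simp only [mid, u, w]
      split_ifs <;> simp_all
    have h0 : (0 : ℝ) ^ β = 0 := Real.zero_rpow hβ0.ne'
    have hu01 : ∀ l : ℕ, u l = 0 ∨ u l = 1 := fun l => by simp only [u]; split_ifs <;> simp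
    have huu : (u i * u j) ^ β = u i * u j := by
      rcases hu01 i with h | h <;> rcases hu01 j with h' | h' <;> simp [h, h', h0]
    rcases hcase i with ⟨hi, hi'⟩ | ⟨hi, hi'⟩ | ⟨hi, hi'⟩
    · rcases hcase j with ⟨hj, hj'⟩ | ⟨hj, hj'⟩ | ⟨hj, hj'⟩
      · rw [hi, hi', hj, hj']; ring_nf
      · rw [hj, hj', mul_zero, zero_add, hpow]; ring
      · rw [hj, hj', mul_zero, mul_zero, add_zero, huu, h0]; ring
    · rw [hi, hi', zero_mul, zero_add, hpow]; ring
    · rw [hi, hi', zero_mul, mul_zero, add_zero, huu, h0]; ring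
  have hy_u : ∑ i : Fin n, y i * u i = 0 := by
    rw [← Finset.sum_range (fun i => y i * u i), sum_range_eq_ends_add_middle hkn]
    · have : ∀ i ∈ Finset.range k, y (i + 1) * u (i + 1) = v i := fun i hi => by
        have : i + 1 ≤ k := by simpa using hi
        simp [y, u, this]
      rw [Finset.sum_congr rfl this]
      simp [y, u]
    · intro i hi
      simp [u, show ¬ i ≤ k by omega]
  have hy_w : ∑ i : Fin n, y i * w i ^ β = 0 := by
    rw [← Finset.sum_range (fun i => y i * w i ^ β), sum_range_eq_ends_add_middle hkn]
    · have : ∀ i ∈ Finset.range k, y (i + 1) * w (i + 1) ^ β = v i * (2 ^ i) ^ β := fun i hi => by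
        have : i + 1 ≤ k := by simpa using hi
        simp [y, w, this]
      rw [Finset.sum_congr rfl this, hv1]
      simp [y, w, Real.zero_rpow hβ0.ne']
    · intro i hi
      simp [y, show i ≠ 0 by omega, show ¬ i ≤ k by omega, show i ≠ k + 1 by omega]
  have hy_mid : ∀ H : ℕ → ℝ, ∑ i : Fin n, y i * mid i * H i
      = ∑ i ∈ Finset.range k, v i * H (i + 1) := by
    intro H
    rw [← Finset.sum_range (fun i => y i * mid i * H i), sum_range_eq_ends_add_middle hkn]
    · have : ∀ i ∈ Finset.range k, y (i + 1) * mid (i + 1) * H (i + 1) = v i * H (i + 1) :=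
        fun i hi => by
          have : i + 1 ≤ k := by simpa using hi
          simp [y, mid, this]
      rw [Finset.sum_congr rfl this]
      simp [mid]
    · intro i hi
      simp [mid, show ¬ i ≤ k by omega]
  have hsum : ∑ i : Fin n, ∑ j : Fin n, y i * y j * A.map (powEnt β) i j
      = (∑ i : Fin n, y i * u i) ^ 2 + ε ^ β * (∑ i : Fin n, y i * w i ^ β) ^ 2
        + ∑ i : Fin n, y i * mid i * ∑ j : Fin n, y j * mid j *
          ((1 + ε * (w i * w j)) ^ β - 1 - ε ^ β * (w i ^ β * w j ^ β)) := by
    rw [sq, sq, Finset.sum_mul_sum, Finset.sum_mul_sum]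
    simp only [hentry, Finset.mul_sum, ← Finset.sum_add_distrib]
    exact Finset.sum_congr rfl fun i _ => Finset.sum_congr rfl fun j _ => by ring
  have hmid : ∑ i : Fin n, y i * mid i * ∑ j : Fin n, y j * mid j *
        ((1 + ε * (w i * w j)) ^ β - 1 - ε ^ β * (w i ^ β * w j ^ β))
      = ∑ i ∈ Finset.range k, ∑ j ∈ Finset.range k,
          v i * v j * ((1 + ε * (2 ^ i * 2 ^ j)) ^ β - 1) - ε ^ β := by
    have hw' : ∀ i ∈ Finset.range k, w (i + 1) = 2 ^ i := fun i hi => by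
      have : i + 1 ≤ k := by simpa using hi
      simp [w, this]
    have hone : ∑ i ∈ Finset.range k, ∑ j ∈ Finset.range k,
        ε ^ β * ((v i * ((2 : ℝ) ^ i) ^ β) * (v j * ((2 : ℝ) ^ j) ^ β)) = ε ^ β := by
      simp only [← Finset.mul_sum, hv1, mul_one]
    rw [hy_mid fun i => ∑ j : Fin n, y j * mid j *
        ((1 + ε * (w i * w j)) ^ β - 1 - ε ^ β * (w i ^ β * w j ^ β))]
    simp only [fun i => hy_mid fun j => (1 + ε * (w i * w j)) ^ β - 1
      - ε ^ β * (w i ^ β * w j ^ β)]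
    refine Eq.trans ?_ (congrArg (_ - ·) hone)
    simp only [Finset.mul_sum, ← Finset.sum_sub_distrib]
    refine Finset.sum_congr rfl fun i hi => Finset.sum_congr rfl fun j hj => ?_
    rw [hw' i hi, hw' j hj]
    ring
  rw [hsum, hy_u, hy_w, hmid] at hq
  norm_num at hq
  linarith

lemma not_mem_HsetG_of_neg {G : SimpleGraph (Fin 2)} (hG : G.Adj 0 1) {β : ℝ} (hβ : β < 0) :
    β ∉ HsetG G := by
  intro hmem
  have hA : !![(2 : ℝ), 1; 1, 2] ∈ PsetG G (Ici 0) := by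
    refine ⟨(posSemidef_iff_sum_nonneg _).2 ⟨?_, fun x => ?_⟩, ?_, ?_⟩
    · simp [Fin.forall_fin_two]
    · simp [Fin.sum_univ_two]
      nlinarith [sq_nonneg (x 0 + x 1), sq_nonneg (x 0), sq_nonneg (x 1)]
    · simp [Fin.forall_fin_two]
    · simp [Fin.forall_fin_two, hG, hG.symm]
  have hq := ((posSemidef_iff_sum_nonneg _).1 (hmem _ hA).1).2 ![1, -1]
  have h2 : (2 : ℝ) ^ β < 1 := Real.rpow_lt_one_of_one_lt_of_neg (by norm_num) hβ
  simp [Fin.sum_univ_two, powEnt] at hq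
  linarith

end Counterexample

section CriticalExponent

lemma powEnt_eq_signedPow (e : Bool) (α : ℝ) {x : ℝ} (hx : 0 ≤ x) :
    powEnt α x = signedPow e α x := by
  rcases hx.eq_or_lt with rfl | hx
  · simp [powEnt, signedPow_zero]
  · simp [powEnt, hx.ne', signedPow_of_pos e α hx]

lemma map_mem_PsetG {V : Type*} [Fintype V] {G : SimpleGraph V} {I : Set ℝ} {A : Matrix V V ℝ}
    (hA : A ∈ PsetG G I) {f : ℝ → ℝ} (hf : f 0 = 0) (h : (A.map f).PosSemidef) :
    A.map f ∈ PsetG G univ :=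
  ⟨h, fun _ _ => mem_univ _, fun i j hij hadj => by simp [hA.2.2 i j hij hadj, hf]⟩

lemma map_signedPow_posSemidef_of_band {n d : ℕ} (hn : 2 ≤ n) (hd : 1 ≤ d)
    {G : SimpleGraph (Fin n)}
    (hG : ∀ i j : Fin n, G.Adj i j ↔ i ≠ j ∧ ((i : ℤ) - (j : ℤ)).natAbs ≤ d)
    {β : ℝ} (hβ : min (d : ℝ) ((n : ℝ) - 2) ≤ β) (e : Bool) {A : Matrix (Fin n) (Fin n) ℝ}
    (hA : A ∈ PsetG G univ) : (A.map (signedPow e β)).PosSemidef := by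
  rcases min_le_iff.1 hβ with h | h
  · refine posSemidef_map_signedPow_of_forall_gt fun γ hγ =>
      map_signedPow_band_posSemidef hd e (h.trans_lt hγ) Finset.univ hA.1 ?_ (by simp)
    intro i j hij
    refine hA.2.2 i j (fun h => ?_) fun h => ?_
    · subst h; omega
    · have := ((hG i j).1 h).2
      omega
  · refine preservesOnCard_of_le (n - 2) ?_ e Finset.univ A (by simp; omega) hA.1 (by simp)
    push_cast [hn]
    exact h

lemma min_le_of_mem_CEset {n d : ℕ} (hn : 2 ≤ n) (hd : 1 ≤ d) {G : SimpleGraph (Fin n)}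
    (hG : ∀ i j : Fin n, G.Adj i j ↔ i ≠ j ∧ ((i : ℤ) - (j : ℤ)).natAbs ≤ d)
    {α : ℝ} (hα : α ∈ CEset (HsetG G)) : min (d : ℝ) ((n : ℝ) - 2) ≤ α := by
  by_contra! hlt
  rcases hn.eq_or_lt with rfl | hn3
  · refine not_mem_HsetG_of_neg ((hG 0 1).2 ⟨by decide, by simpa using hd⟩) ?_ (hα α le_rfl)
    simpa using hlt.trans_le (min_le_right _ _)
  · have hcast : min (d : ℝ) ((n : ℝ) - 2) = ((min d (n - 2) : ℕ) : ℝ) := by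
      push_cast [hn]
      rfl
    rw [hcast] at hlt
    obtain ⟨β, hβ, hβk⟩ := exists_between (max_lt hlt (sub_one_lt ((min d (n - 2) : ℕ) : ℝ)))
    refine not_mem_HsetG_of_band (k := min d (n - 2)) (by omega) (by omega)
      (fun i j hij h => (hG i j).2 ⟨hij, by omega⟩) ((le_max_right _ _).trans_lt hβ) hβk
      (hα β ((le_max_left _ _).trans hβ.le))

end CriticalExponent

/-- **Corollary 3.14 (band graphs)**: the band graph on `{1,…,n}` (`n ≥ 2`) with bandwidth
`1 ≤ d ≤ n` (edges between distinct `i,j` with `|i−j| ≤ d`) has all three critical exponents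
equal to `min(d, n−2)`. -/
theorem critical_exponent_band_graph {n d : ℕ} (hn : 2 ≤ n) (hd1 : 1 ≤ d) (hdn : d ≤ n)
    (G : SimpleGraph (Fin n))
    (hG : ∀ i j : Fin n, G.Adj i j ↔ i ≠ j ∧ ((i : ℤ) - (j : ℤ)).natAbs ≤ d) :
    IsLeast (CEset (HsetG G)) (min (d : ℝ) ((n : ℝ) - 2)) ∧
    IsLeast (CEset (HsetPsi G)) (min (d : ℝ) ((n : ℝ) - 2)) ∧
    IsLeast (CEset (HsetPhi G)) (min (d : ℝ) ((n : ℝ) - 2)) := by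
  have hphi : ∀ β, min (d : ℝ) ((n : ℝ) - 2) ≤ β → β ∈ HsetPhi G := fun β hβ A hA =>
    map_mem_PsetG hA (signedPow_zero true β) (map_signedPow_posSemidef_of_band hn hd1 hG hβ true hA)
  have hpsi : ∀ β, min (d : ℝ) ((n : ℝ) - 2) ≤ β → β ∈ HsetPsi G := fun β hβ A hA =>
    map_mem_PsetG hA (signedPow_zero false β)
      (map_signedPow_posSemidef_of_band hn hd1 hG hβ false hA)
  have map_pow : ∀ e β (A : Matrix (Fin n) (Fin n) ℝ), A ∈ PsetG G (Ici 0) →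
      A.map (powEnt β) = A.map (signedPow e β) := fun e β A hA => by
    ext i j
    exact powEnt_eq_signedPow e β (hA.2.1 i j)
  have hphi_sub : HsetPhi G ⊆ HsetG G := fun β hβ A hA => by
    rw [map_pow true β A hA]
    exact hβ A ⟨hA.1, fun _ _ => mem_univ _, hA.2.2⟩
  have hpsi_sub : HsetPsi G ⊆ HsetG G := fun β hβ A hA => by
    rw [map_pow false β A hA]
    exact hβ A ⟨hA.1, fun _ _ => mem_univ _, hA.2.2⟩
  exact ⟨⟨fun β hβ => hphi_sub (hphi β hβ), fun α hα => min_le_of_mem_CEset hn hd1 hG hα⟩,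
    ⟨hpsi, fun α hα => min_le_of_mem_CEset hn hd1 hG fun β hβ => hpsi_sub (hα β hβ)⟩,
    ⟨hphi, fun α hα => min_le_of_mem_CEset hn hd1 hG fun β hβ => hphi_sub (hα β hβ)⟩⟩
end
end

section
/- Let G be a finite simple graph with a perfect ordering B_1,…,B_k of its prime components, with separators S_j := (B_1 ∪ ⋯ ∪ B_{j−1}) ∩ B_j, and set s := max_{1≤j≤k} |S_j|. Let f : ℝ → ℝ with f(0) = 0. If f[−] preserves positivity on P_{G_{B_i}} for all 1 ≤ i ≤ k, and f[−] is Loewner super-additive on P_{K_s}(ℝ), then f[−] preserves positivity on P_G. -/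
open Set Matrix

noncomputable section

/-- A decomposition `(A,C,B)` of a graph `G`: a partition of the vertices such that `C`
separates `A` from `B` (every walk from `A` to `B` meets `C`) and `C` induces a complete
subgraph. -/
def IsDecomposition {V : Type*} (G : SimpleGraph V) (A C B : Set V) : Prop :=
  (∀ v, v ∈ A ∨ v ∈ C ∨ v ∈ B) ∧
  Disjoint A C ∧ Disjoint A B ∧ Disjoint C B ∧
  (∀ a ∈ A, ∀ b ∈ B, ∀ p : G.Walk a b, ∃ c ∈ C, c ∈ p.support) ∧
  (∀ c₁ ∈ C, ∀ c₂ ∈ C, c₁ ≠ c₂ → G.Adj c₁ c₂)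

/-- `P_{G_S}` for a subset `S` of the vertices, identified with full-size matrices by padding
with zeros: positive semidefinite matrices supported on `S × S` whose zero pattern respects
the (induced subgraph of the) graph `G`. -/
def PsetSub {V : Type*} [Fintype V] (G : SimpleGraph V) (S : Set V) :
    Set (Matrix V V ℝ) :=
  {M | M.PosSemidef ∧ (∀ i j, (i ∉ S ∨ j ∉ S) → M i j = 0) ∧
    ∀ i j, i ≠ j → ¬ G.Adj i j → M i j = 0}

/-- A graph is prime if it admits no (proper) decomposition. -/
def IsPrimeGraph {V : Type*} (G : SimpleGraph V) : Prop :=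
  ∀ A C B : Set V, IsDecomposition G A C B → A = ∅ ∨ B = ∅

/-- Every real positive semidefinite matrix is a Gram matrix. -/
lemma Matrix.PosSemidef.exists_eq_gram {V : Type*} [Fintype V] {M : Matrix V V ℝ}
    (hM : M.PosSemidef) : ∃ (m : ℕ) (w : V → EuclideanSpace ℝ (Fin m)), M = gram ℝ w := by
  obtain ⟨m, v, rfl⟩ := posSemidef_iff_eq_sum_vecMulVec.mp hM
  refine ⟨m, fun i => WithLp.toLp 2 fun l => v l i, ?_⟩
  ext i j
  simp [Matrix.sum_apply, vecMulVec_apply, gram_apply, PiLp.inner_apply, mul_comm]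

/-- A positive semidefinite matrix that vanishes on `X × Y` is a sum of two positive semidefinite
matrices, the first vanishing on the rows of `Y` and the second on the rows of `X`. -/
lemma Matrix.PosSemidef.exists_add_eq {V : Type*} [Fintype V] {M : Matrix V V ℝ}
    (hM : M.PosSemidef) (X Y : Set V) (hXY : ∀ i ∈ X, ∀ j ∈ Y, M i j = 0) :
    ∃ M₁ M₂ : Matrix V V ℝ, M₁.PosSemidef ∧ M₂.PosSemidef ∧ M = M₁ + M₂ ∧
      (∀ i j, i ∈ Y → M₁ i j = 0) ∧ (∀ i j, i ∈ X → M₂ i j = 0) := by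
  obtain ⟨m, w, rfl⟩ := hM.exists_eq_gram
  set L := Submodule.span ℝ (w '' X) with hL
  refine ⟨gram ℝ fun i => L.starProjection (w i), gram ℝ fun i => w i - L.starProjection (w i),
    posSemidef_gram .., posSemidef_gram .., ?_, ?_, ?_⟩
  · ext i j
    have h₁ := L.starProjection_inner_eq_zero (w i) _ (L.starProjection_apply_mem (w j))
    have h₂ := L.starProjection_inner_eq_zero (w j) _ (L.starProjection_apply_mem (w i))
    rw [real_inner_comm] at h₂
    simp only [Matrix.add_apply, gram_apply, inner_sub_left, inner_sub_right] at *
    linarith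
  · intro i j hi
    have h : L.starProjection (w i) = 0 := by
      rw [Submodule.starProjection_apply_eq_zero_iff, Submodule.mem_orthogonal, hL]
      intro u hu
      induction hu using Submodule.span_induction with
      | mem u hu =>
        obtain ⟨x, hx, rfl⟩ := hu
        exact hXY x hx i hi
      | zero => simp
      | add x y _ _ hx hy => rw [inner_add_left, hx, hy, add_zero]
      | smul a x _ hx => rw [inner_smul_left, hx, mul_zero]
    simp [gram_apply, h]
  · intro i j hi
    have h : L.starProjection (w i) = w i :=
      Submodule.starProjection_eq_self_iff.mpr (Submodule.subset_span ⟨i, hi, rfl⟩)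
    simp [gram_apply, h]

/-- Super-additivity defects in dimension `s` control those of matrices of any size whose defect
is supported on a set of at most `s` indices. -/
lemma posSemidef_superadditivity_defect {V : Type*} [Fintype V] [DecidableEq V] {s : ℕ} {f : ℝ → ℝ}
    (hsuper : ∀ M N : Matrix (Fin s) (Fin s) ℝ, M.PosSemidef → N.PosSemidef →
      ((M + N).map f - M.map f - N.map f).PosSemidef)
    {T : Finset V} (hT : T.card ≤ s) {M N : Matrix V V ℝ} (hM : M.PosSemidef) (hN : N.PosSemidef)
    (hsupp : ∀ i j, i ∉ T ∨ j ∉ T → ((M + N).map f - M.map f - N.map f) i j = 0) :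
    ((M + N).map f - M.map f - N.map f).PosSemidef := by
  rcases T.eq_empty_or_nonempty with rfl | ⟨t, ht⟩
  · convert PosSemidef.zero
    ext i j
    exact hsupp i j (by simp)
  · obtain ⟨e⟩ : Nonempty (T ↪ Fin s) := Function.Embedding.nonempty_of_card_le (by simpa using hT)
    have : Nonempty T := ⟨⟨t, ht⟩⟩
    let h : Fin s → V := fun a => (Function.invFun e a : T)
    let g : V → Fin s := fun v => if hv : v ∈ T then e ⟨v, hv⟩ else e ⟨t, ht⟩
    have hg : ∀ v ∈ T, h (g v) = v := fun v hv => by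
      simp [h, g, hv, Function.leftInverse_invFun e.injective _]
    have hsub := (hsuper _ _ (hM.submatrix h) (hN.submatrix h)).submatrix g
    convert hsub.mul_mul_conjTranspose_same
      (diagonal fun v => if v ∈ T then (1 : ℝ) else 0) using 1
    ext i j
    by_cases hij : i ∈ T ∧ j ∈ T
    · simp [hij.1, hij.2, hg]
    · rw [hsupp i j (by tauto)]
      rcases not_and_or.mp hij with hi | hj
      · simp [hi]
      · simp [hj]

/-- Positivity preservation glues along a clique separator on which `f` is super-additive. -/
lemma posSemidef_map_of_mem_PsetSub_union {V : Type*} [Fintype V] [DecidableEq V]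
    {G : SimpleGraph V} {s : ℕ} {f : ℝ → ℝ} (hf0 : f 0 = 0)
    (hsuper : ∀ M N : Matrix (Fin s) (Fin s) ℝ, M.PosSemidef → N.PosSemidef →
      ((M + N).map f - M.map f - N.map f).PosSemidef)
    {U W : Finset V} (hcard : (U ∩ W).card ≤ s) (hclique : G.IsClique ↑(U ∩ W))
    (hsep : ∀ u ∈ U, u ∉ W → ∀ w ∈ W, w ∉ U → ¬ G.Adj u w)
    (hU : ∀ M ∈ PsetSub G (U : Set V), (M.map f).PosSemidef)
    (hW : ∀ M ∈ PsetSub G (W : Set V), (M.map f).PosSemidef) :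
    ∀ M ∈ PsetSub G ((U ∪ W : Finset V) : Set V), (M.map f).PosSemidef := by
  rintro M ⟨hM, hMsupp, hMG⟩
  have hzero : ∀ i ∈ (Wᶜ : Set V), ∀ j ∈ (Uᶜ : Set V), M i j = 0 := by
    intro i hi j hj
    simp only [Set.mem_compl_iff, Finset.mem_coe] at hi hj
    by_cases hiU : i ∈ U
    · by_cases hjW : j ∈ W
      · exact hMG i j (fun h => hj (h ▸ hiU)) (hsep i hiU hi j hjW hj)
      · exact hMsupp i j (Or.inr (by simp [hj, hjW]))
    · exact hMsupp i j (Or.inl (by simp [hi, hiU]))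
  obtain ⟨M₁, M₂, h₁, h₂, rfl, hz₁, hz₂⟩ := hM.exists_add_eq (Wᶜ : Set V) (Uᶜ : Set V) hzero
  have hz₁' : ∀ i j, i ∉ U ∨ j ∉ U → M₁ i j = 0 := by
    rintro i j (hi | hj)
    · exact hz₁ i j hi
    · rw [← h₁.isHermitian.apply i j, hz₁ j i hj, star_zero]
  have hz₂' : ∀ i j, i ∉ W ∨ j ∉ W → M₂ i j = 0 := by
    rintro i j (hi | hj)
    · exact hz₂ i j hi
    · rw [← h₂.isHermitian.apply i j, hz₂ j i hj, star_zero]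
  have hG : ∀ i j, i ≠ j → ¬ G.Adj i j → M₁ i j = 0 ∧ M₂ i j = 0 := by
    intro i j hij hadj
    have hsum : M₁ i j + M₂ i j = 0 := hMG i j hij hadj
    by_cases hjU : i ∉ U ∨ j ∉ U
    · have := hz₁' i j hjU
      exact ⟨this, by linarith⟩
    by_cases hjW : i ∉ W ∨ j ∉ W
    · have := hz₂' i j hjW
      exact ⟨by linarith, this⟩
    push Not at hjU hjW
    exact absurd (hclique (by simp [hjU.1, hjW.1]) (by simp [hjU.2, hjW.2]) hij) hadj
  have hdefect := posSemidef_superadditivity_defect hsuper hcard h₁ h₂ fun i j hij => by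
    rw [Finset.mem_inter, Finset.mem_inter] at hij
    by_cases hjU : i ∉ U ∨ j ∉ U
    · simp [hz₁' i j hjU, hf0]
    · simp [hz₂' i j (by tauto), hf0]
  have hsum := (hdefect.add (hU M₁ ⟨h₁, hz₁', fun i j hij h => (hG i j hij h).1⟩)).add
    (hW M₂ ⟨h₂, hz₂', fun i j hij h => (hG i j hij h).2⟩)
  convert hsum using 1
  abel

/-- **Theorem 4.1**: let `G` have a perfect ordering `B_1, …, B_k` of its prime components,
with separators `S_j = (B_1 ∪ ⋯ ∪ B_{j−1}) ∩ B_j` of maximal size `s`, and let `f(0) = 0`.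
If `f[−]` preserves positivity on each `P_{G_{B_i}}` and is Loewner super-additive on
`P_{K_s}(ℝ)`, then `f[−]` preserves positivity on `P_G`. -/
theorem prime_components_preserve_positivity {V : Type*} [Fintype V] [DecidableEq V]
    (G : SimpleGraph V) (k : ℕ) (B : Fin k → Finset V)
    (hcoverV : ∀ v : V, ∃ i, v ∈ B i)
    (hcoverE : ∀ u v : V, G.Adj u v → ∃ i, u ∈ B i ∧ v ∈ B i)
    (hprime : ∀ i, IsPrimeGraph (G.induce ((B i : Finset V) : Set V)))
    (S : Fin k → Finset V)
    (hS : ∀ i, S i = ((Finset.univ.filter (fun j => j < i)).biUnion B) ∩ B i)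
    (hperf : ∀ i : Fin k, 0 < (i : ℕ) → ∃ j, j < i ∧ S i ⊆ B j)
    (hScl : ∀ i, G.IsClique ↑(S i))
    (s : ℕ) (hs : s = Finset.univ.sup (fun i => (S i).card))
    (f : ℝ → ℝ) (hf0 : f 0 = 0)
    (hpres : ∀ i, ∀ M ∈ PsetSub G ((B i : Finset V) : Set V), (M.map f).PosSemidef)
    (hsuper : ∀ M N : Matrix (Fin s) (Fin s) ℝ, M.PosSemidef → N.PosSemidef →
      ((M + N).map f - M.map f - N.map f).PosSemidef) :
    ∀ A ∈ PsetG G univ, (A.map f).PosSemidef := by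
  have hglue : ∀ m ≤ k, ∀ M ∈ PsetSub G
      (((Finset.univ.filter fun j : Fin k => (j : ℕ) < m).biUnion B : Finset V) : Set V),
      (M.map f).PosSemidef := by
    intro m hm
    induction m with
    | zero =>
      rintro M ⟨-, hM, -⟩
      convert PosSemidef.zero
      ext i j
      simp [hM i j (by simp), hf0]
    | succ m ih =>
      set i : Fin k := ⟨m, hm⟩ with hi
      have hU : (Finset.univ.filter fun j : Fin k => (j : ℕ) < m).biUnion B =
          (Finset.univ.filter fun j => j < i).biUnion B := rfl
      have hsucc : (Finset.univ.filter fun j : Fin k => (j : ℕ) < m + 1).biUnion B =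
          (Finset.univ.filter fun j => j < i).biUnion B ∪ B i := by
        have : (Finset.univ.filter fun j : Fin k => (j : ℕ) < m + 1) =
            insert i (Finset.univ.filter fun j => j < i) := by
          ext j
          simp only [Finset.mem_filter, Finset.mem_univ, true_and, Finset.mem_insert, Fin.ext_iff,
            Fin.lt_def, hi]
          omega
        rw [this, Finset.biUnion_insert, Finset.union_comm]
      rw [hsucc]
      refine posSemidef_map_of_mem_PsetSub_union hf0 hsuper ?_ ?_ ?_ (hU ▸ ih (by omega)) (hpres i)
      · rw [← hS, hs]
        exact Finset.le_sup (f := fun i => (S i).card) (Finset.mem_univ i)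
      · rw [← hS]
        exact hScl i
      · intro u hu hui w hw hwU hadj
        simp only [Finset.mem_biUnion, Finset.mem_filter, Finset.mem_univ, true_and] at hu hwU
        obtain ⟨a, hai, hua⟩ := hu
        have hno : ∀ l : Fin k, u ∈ B l → w ∉ B l := by
          intro l
          induction l using WellFoundedLT.induction with
          | ind l ihl =>
            intro hul hwl
            rcases lt_trichotomy l i with hli | rfl | hil
            · exact hwU ⟨l, hli, hwl⟩
            · exact hui hul
            · obtain ⟨j, hjl, hSj⟩ := hperf l (lt_of_le_of_lt (Nat.zero_le _) hil)
              have hmem : ∀ (x : V) (b : Fin k), b < l → x ∈ B b → x ∈ B l → x ∈ B j := by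
                intro x b hb hxb hxl
                refine hSj ?_
                rw [hS]
                simp only [Finset.mem_inter, Finset.mem_biUnion, Finset.mem_filter,
                  Finset.mem_univ, true_and]
                exact ⟨⟨b, hb, hxb⟩, hxl⟩
              exact ihl j hjl (hmem u a (hai.trans hil) hua hul) (hmem w i hil hw hwl)
        obtain ⟨l, hul, hwl⟩ := hcoverE u w hadj
        exact hno l hul hwl
  rintro A ⟨hA, -, hAG⟩
  refine hglue k le_rfl A ⟨hA, fun i j hij => ?_, hAG⟩
  exfalso
  simp [hcoverV] at hij
end
end

section
/- Let C_n denote the cycle graph on n vertices. For all n ≥ 3, H_{C_n} = H_{C_n}^ψ = [1,∞), and H_{C_4}^φ = [2,∞). Moreover, for every n > 4 one has [2,∞) ⊆ H_{C_n}^φ ⊆ [1,∞), and 1 ∉ H_{C_n}^φ when n is even. -/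
open Set Matrix

noncomputable section

theorem psiF_zero (α : ℝ) : psiF α 0 = 0 := by simp [psiF]

theorem psiF_of_nonneg {α x : ℝ} (hα : 0 < α) (hx : 0 ≤ x) : psiF α x = x ^ α := by
  rcases hx.eq_or_lt with rfl | hx
  · simp [psiF, hα.ne']
  · simp [psiF, Real.sign_of_pos hx, abs_of_pos hx]

theorem psiF_of_nonpos {α x : ℝ} (hα : 0 < α) (hx : x ≤ 0) : psiF α x = -(-x) ^ α := by
  rcases hx.eq_or_lt with rfl | hx
  · simp [psiF, hα.ne']
  · simp [psiF, Real.sign_of_neg hx, abs_of_neg hx]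

theorem psiF_nonneg {α x : ℝ} (hx : 0 ≤ x) : 0 ≤ psiF α x := by
  rcases hx.eq_or_lt with rfl | hx
  · simp [psiF]
  · simp only [psiF, Real.sign_of_pos hx]
    positivity

theorem psiF_mul (α x y : ℝ) : psiF α (x * y) = psiF α x * psiF α y := by
  have hs : Real.sign (x * y) = Real.sign x * Real.sign y := by
    rcases lt_trichotomy x 0 with hx | rfl | hx <;> rcases lt_trichotomy y 0 with hy | rfl | hy <;>
      simp [Real.sign_of_neg, Real.sign_of_pos, mul_pos_of_neg_of_neg, mul_neg_of_neg_of_pos,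
        mul_neg_of_pos_of_neg, *]
  simp only [psiF, hs, abs_mul, Real.mul_rpow (abs_nonneg x) (abs_nonneg y)]
  ring

theorem psiF_one (α : ℝ) : psiF α 1 = 1 := by simp [psiF, Real.sign_one]

theorem psiF_inv (α x : ℝ) : psiF α x⁻¹ = (psiF α x)⁻¹ := by
  rcases eq_or_ne x 0 with rfl | hx
  · simp [psiF]
  · refine eq_inv_of_mul_eq_one_left ?_
    rw [← psiF_mul, inv_mul_cancel₀ hx, psiF_one]

theorem psiF_eq_zero (α x : ℝ) : psiF α x = 0 ↔ x = 0 := by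
  refine ⟨fun h => ?_, fun h => h ▸ psiF_zero α⟩
  by_contra hx
  have := psiF_mul α x x⁻¹
  rw [mul_inv_cancel₀ hx, psiF_one, h, zero_mul] at this
  exact one_ne_zero this

theorem psiF_div (α x y : ℝ) : psiF α (x / y) = psiF α x / psiF α y := by
  rw [div_eq_mul_inv, psiF_mul, psiF_inv, div_eq_mul_inv]

theorem psiF_neg (α x : ℝ) : psiF α (-x) = -psiF α x := by
  rw [← neg_one_mul, psiF_mul]; simp [psiF, Real.sign_of_neg]

theorem psiF_add_le {α x y : ℝ} (hα : 1 ≤ α) (hx : 0 ≤ x) (hy : 0 ≤ y) :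
    psiF α x + psiF α y ≤ psiF α (x + y) := by
  have h0 : 0 < α := by linarith
  rw [psiF_of_nonneg h0 hx, psiF_of_nonneg h0 hy, psiF_of_nonneg h0 (add_nonneg hx hy)]
  lift x to NNReal using hx
  lift y to NNReal using hy
  exact_mod_cast NNReal.add_rpow_le_rpow_add x y hα

theorem hasDerivAt_psiF {α : ℝ} (hα : 1 < α) (x : ℝ) :
    HasDerivAt (psiF α) (α * |x| ^ (α - 1)) x := by
  have h0 : 0 < α := by linarith
  rcases lt_trichotomy x 0 with hx | rfl | hx
  · have h : HasDerivAt (fun y : ℝ => -(-y) ^ α) (α * |x| ^ (α - 1)) x := by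
      have := ((hasDerivAt_neg x).rpow_const (p := α) (Or.inr hα.le)).neg
      simpa [abs_of_neg hx, Pi.neg_def] using this
    refine h.congr_of_eventuallyEq ?_
    filter_upwards [Iio_mem_nhds hx] with y hy using psiF_of_nonpos h0 (le_of_lt hy)
  · rw [hasDerivAt_iff_tendsto_slope]
    have h : Filter.Tendsto (fun y : ℝ => |y| ^ (α - 1)) (nhdsWithin 0 {0}ᶜ)
        (nhds (α * |0| ^ (α - 1))) := by
      have hc : ContinuousAt (fun y : ℝ => |y| ^ (α - 1)) 0 :=
        continuous_abs.continuousAt.rpow_const (Or.inr (by linarith))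
      have := hc.tendsto.mono_left (nhdsWithin_le_nhds (s := {0}ᶜ))
      simpa [Real.zero_rpow (by linarith : α - 1 ≠ 0)] using this
    refine h.congr' ?_
    filter_upwards [self_mem_nhdsWithin] with y hy
    have hy : y ≠ 0 := hy
    rw [slope_def_field, psiF_zero, sub_zero, sub_zero, Real.rpow_sub_one (abs_ne_zero.2 hy)]
    rcases hy.lt_or_gt with hy | hy
    · rw [psiF, Real.sign_of_neg hy, abs_of_neg hy, div_neg, neg_one_mul, neg_div]
    · rw [psiF, Real.sign_of_pos hy, abs_of_pos hy, one_mul]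
  · have h : HasDerivAt (fun y : ℝ => y ^ α) (α * |x| ^ (α - 1)) x := by
      simpa [abs_of_pos hx] using Real.hasDerivAt_rpow_const (p := α) (Or.inl hx.ne')
    refine h.congr_of_eventuallyEq ?_
    filter_upwards [Ioi_mem_nhds hx] with y hy using psiF_of_nonneg h0 (le_of_lt hy)

theorem binary_form_nonneg {a b c : ℝ} (ha : 0 ≤ a) (hc : 0 ≤ c) (h : b ^ 2 ≤ a * c) (x y : ℝ) :
    0 ≤ a * x ^ 2 + 2 * b * x * y + c * y ^ 2 := by
  rcases ha.eq_or_lt with rfl | ha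
  · have hb : b = 0 := by nlinarith
    subst hb
    nlinarith [mul_nonneg hc (sq_nonneg y)]
  · have h1 : 0 ≤ a * (a * x ^ 2 + 2 * b * x * y + c * y ^ 2) := by
      nlinarith [sq_nonneg (a * x + b * y), mul_nonneg (sub_nonneg.2 h) (sq_nonneg y)]
    exact nonneg_of_mul_nonneg_right h1 ha

theorem completion_nonneg {e l r : ℝ} (h : ∀ t : ℝ, 0 ≤ e * t ^ 2 + 2 * l * t + r) :
    0 ≤ e ∧ (e = 0 → l = 0) ∧ 0 ≤ r - l ^ 2 / e := by
  have hl : e = 0 → l = 0 := by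
    rintro rfl
    by_contra hl
    have h1 := h (-(r + 1) / (2 * l))
    rw [mul_div_cancel₀ _ (mul_ne_zero two_ne_zero hl)] at h1
    linarith
  have he : 0 ≤ e := by
    by_contra he
    have he : e < 0 := not_le.1 he
    obtain ⟨u, hu⟩ : ∃ u, e * u = -(|r| + 1) := ⟨-(|r| + 1) / e, mul_div_cancel₀ _ he.ne⟩
    have hu0 : 0 ≤ u := by nlinarith [abs_nonneg r]
    nlinarith [h (u + 1), h (-(u + 1)), le_abs_self r, abs_nonneg r, mul_nonneg hu0 hu0]
  refine ⟨he, hl, ?_⟩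
  rcases he.eq_or_lt with rfl | he
  · simpa [hl rfl] using h 0
  · have := h (-l / e)
    have e1 : e * (-l / e) ^ 2 + 2 * l * (-l / e) + r = r - l ^ 2 / e := by field_simp; ring
    rwa [e1] at this

theorem nonneg_of_completion {e l r : ℝ} (he : 0 ≤ e) (hl : e = 0 → l = 0)
    (hr : 0 ≤ r - l ^ 2 / e) (t : ℝ) : 0 ≤ e * t ^ 2 + 2 * l * t + r := by
  rcases he.eq_or_lt with rfl | he
  · simpa [hl rfl] using hr
  · have e1 : e * t ^ 2 + 2 * l * t + r = e * (t + l / e) ^ 2 + (r - l ^ 2 / e) := by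
      field_simp; ring
    rw [e1]; positivity

theorem psiF_form_mono {α : ℝ} (hα : 1 ≤ α) {p t q a b c : ℝ} (hp : 0 ≤ p) (hq : 0 ≤ q)
    (ht : t ^ 2 ≤ p * q) (ha : 0 ≤ a) (hc : 0 ≤ c) (hb : b ^ 2 ≤ a * c) (x y : ℝ) :
    psiF α p * x ^ 2 + 2 * psiF α t * x * y + psiF α q * y ^ 2 ≤
      psiF α (p + a) * x ^ 2 + 2 * psiF α (t + b) * x * y + psiF α (q + c) * y ^ 2 := by
  rcases hα.eq_or_lt with rfl | hα
  · have h1 : ∀ z, psiF 1 z = z := fun z => by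
      rcases le_total 0 z with hz | hz
      · rw [psiF_of_nonneg one_pos hz, Real.rpow_one]
      · rw [psiF_of_nonpos one_pos hz, Real.rpow_one, neg_neg]
    simp only [h1]
    linarith [binary_form_nonneg ha hc hb x y]
  let F : ℝ → ℝ := fun s => psiF α (p + s * a) * x ^ 2 + 2 * psiF α (t + s * b) * x * y +
    psiF α (q + s * c) * y ^ 2
  have hd : ∀ u v s : ℝ, HasDerivAt (fun s => psiF α (u + s * v))
      (α * |u + s * v| ^ (α - 1) * v) s := fun u v s => by
    have h := (hasDerivAt_psiF hα (u + s * v)).comp s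
      (((hasDerivAt_id s).mul_const v).const_add u)
    simpa [Function.comp_def] using h
  have hF : ∀ s, HasDerivAt F (α * |p + s * a| ^ (α - 1) * a * x ^ 2 +
      2 * (α * |t + s * b| ^ (α - 1) * b) * x * y +
      α * |q + s * c| ^ (α - 1) * c * y ^ 2) s := fun s =>
    (((hd p a s).mul_const _).add ((((hd t b s).const_mul 2).mul_const x).mul_const y)).add
      ((hd q c s).mul_const _)
  have hmono : MonotoneOn F (Icc 0 1) := by
    refine monotoneOn_of_deriv_nonneg (convex_Icc 0 1)
      (fun s _ => (hF s).continuousAt.continuousWithinAt)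
      (fun s _ => (hF s).differentiableAt.differentiableWithinAt) fun s hs => ?_
    rw [interior_Icc] at hs
    have hs : 0 < s := hs.1
    rw [(hF s).deriv]
    have hcross : 2 * (t * b) ≤ p * c + a * q := by
      have : (t * b) ^ 2 ≤ (p * c) * (a * q) := by
        calc (t * b) ^ 2 = t ^ 2 * b ^ 2 := by ring
          _ ≤ (p * q) * (a * c) := by gcongr
          _ = _ := by ring
      have h2 : 0 ≤ p * c := by positivity
      have h3 : 0 ≤ a * q := by positivity
      refine le_of_sq_le_sq ?_ (by positivity)
      nlinarith [sq_nonneg (p * c - a * q)]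
    have hsq : (t + s * b) ^ 2 ≤ (p + s * a) * (q + s * c) := by
      nlinarith [mul_nonneg hs.le (sub_nonneg.2 hcross), mul_nonneg (sq_nonneg s) (sub_nonneg.2 hb)]
    have hpw : (|t + s * b| ^ (α - 1)) ^ 2 ≤ |p + s * a| ^ (α - 1) * |q + s * c| ^ (α - 1) := by
      rw [← Real.mul_rpow (abs_nonneg _) (abs_nonneg _), sq,
        ← Real.mul_rpow (abs_nonneg _) (abs_nonneg _)]
      refine Real.rpow_le_rpow (by positivity) ?_ (by linarith)
      rw [abs_mul_abs_self, ← abs_mul, ← sq]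
      exact hsq.trans (le_abs_self _)
    have key := binary_form_nonneg (a := |p + s * a| ^ (α - 1) * a)
      (b := |t + s * b| ^ (α - 1) * b) (c := |q + s * c| ^ (α - 1) * c)
      (by positivity) (by positivity) (by
        calc (|t + s * b| ^ (α - 1) * b) ^ 2 = (|t + s * b| ^ (α - 1)) ^ 2 * b ^ 2 := by ring
          _ ≤ (|p + s * a| ^ (α - 1) * |q + s * c| ^ (α - 1)) * (a * c) := by gcongr
          _ = _ := by ring) x y
    have := mul_nonneg (by linarith : 0 ≤ α) key
    linarith
  have := hmono (left_mem_Icc.2 zero_le_one) (right_mem_Icc.2 zero_le_one) zero_le_one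
  simpa [F] using this

theorem ternary_psiF_nonneg {α : ℝ} (hα : 1 ≤ α) {a b c d e g : ℝ}
    (h : ∀ x y z : ℝ, 0 ≤ a * x ^ 2 + 2 * b * x * y + e * y ^ 2 + 2 * c * y * z + d * z ^ 2 +
      2 * g * z * x) (x y z : ℝ) :
    0 ≤ psiF α a * x ^ 2 + 2 * psiF α b * x * y + psiF α e * y ^ 2 + 2 * psiF α c * y * z +
      psiF α d * z ^ 2 + 2 * psiF α g * z * x := by
  have hz : ∀ x y, 0 ≤ d ∧ (d = 0 → g * x + c * y = 0) ∧
      0 ≤ a * x ^ 2 + 2 * b * x * y + e * y ^ 2 - (g * x + c * y) ^ 2 / d := fun x y =>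
    completion_nonneg fun z => by linarith [h x y z]
  have hd : 0 ≤ d := (hz 0 0).1
  have hg : d = 0 → g = 0 := fun h0 => by simpa using (hz 1 0).2.1 h0
  have hc : d = 0 → c = 0 := fun h0 => by simpa using (hz 0 1).2.1 h0
  have hy : ∀ x, 0 ≤ e - c ^ 2 / d ∧ (e - c ^ 2 / d = 0 → (b - g * c / d) * x = 0) ∧
      0 ≤ (a - g ^ 2 / d) * x ^ 2 - ((b - g * c / d) * x) ^ 2 / (e - c ^ 2 / d) := fun x =>
    completion_nonneg fun y => by
      have := (hz x y).2.2
      ring_nf at this ⊢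
      linarith
  have hC : 0 ≤ e - c ^ 2 / d := (hy 0).1
  have hA' : 0 ≤ a - g ^ 2 / d - (b - g * c / d) ^ 2 / (e - c ^ 2 / d) := by
    simpa using (hy 1).2.2
  have hA : 0 ≤ a - g ^ 2 / d := by
    have : 0 ≤ (b - g * c / d) ^ 2 / (e - c ^ 2 / d) := by positivity
    linarith
  have hB : (b - g * c / d) ^ 2 ≤ (a - g ^ 2 / d) * (e - c ^ 2 / d) := by
    rcases hC.eq_or_lt with h0 | h0
    · have := (hy 1).2.1 h0.symm
      rw [mul_one] at this
      rw [← h0, this]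
      simp
    · rw [← div_le_iff₀ h0]
      linarith
  have key := psiF_form_mono hα (p := g ^ 2 / d) (t := g * c / d) (q := c ^ 2 / d)
    (by positivity) (by positivity) (le_of_eq (by ring)) hA hC hB x y
  simp only [add_sub_cancel, psiF_div, psiF_mul, sq g, sq c] at key
  have := nonneg_of_completion (e := psiF α d) (l := psiF α g * x + psiF α c * y)
    (r := psiF α a * x ^ 2 + 2 * psiF α b * x * y + psiF α e * y ^ 2) (psiF_nonneg hd)
    (fun h0 => by
      have h0 : d = 0 := (psiF_eq_zero α d).1 h0
      simp [hg h0, hc h0, psiF_zero])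
    (by
      have e1 : (psiF α g * x + psiF α c * y) ^ 2 / psiF α d =
          psiF α g * psiF α g / psiF α d * x ^ 2 + 2 * (psiF α g * psiF α c / psiF α d) * x * y +
            psiF α c * psiF α c / psiF α d * y ^ 2 := by ring
      rw [e1]
      linarith) z
  linarith

/-- The quadratic form of a weighted cycle with consecutive vertices `x 0, …, x m, z`. -/
def loopForm (m : ℕ) (a b : ℕ → ℝ) (e c d g : ℝ) (x : ℕ → ℝ) (z : ℝ) : ℝ :=
  ∑ i ∈ Finset.range m, (a i * x i ^ 2 + 2 * b i * x i * x (i + 1)) +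
    e * x m ^ 2 + 2 * c * x m * z + d * z ^ 2 + 2 * g * z * x 0

theorem loopForm_succ (m : ℕ) (a b : ℕ → ℝ) (e c d g : ℝ) (x : ℕ → ℝ) (z : ℝ) :
    loopForm (m + 1) a b e c d g x z = e * x (m + 1) ^ 2 +
      2 * (b m * x m + c * z) * x (m + 1) + loopForm m a b (a m) 0 d g x z := by
  simp only [loopForm, Finset.sum_range_succ]
  ring

theorem loopForm_congr {m : ℕ} (a b : ℕ → ℝ) (e c d g : ℝ) {x y : ℕ → ℝ}
    (h : ∀ i ≤ m, x i = y i) (z : ℝ) : loopForm m a b e c d g x z = loopForm m a b e c d g y z := by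
  simp only [loopForm]
  rw [h m le_rfl, h 0 (Nat.zero_le m), Finset.sum_congr rfl fun i hi => ?_]
  have := Finset.mem_range.1 hi
  rw [h i (by omega), h (i + 1) (by omega)]

/-- Eliminating the last vertex of the path: the Schur complement is again a cycle form. -/
theorem loopForm_sub_sq_div (m : ℕ) (a b : ℕ → ℝ) (e c d g : ℝ) (x : ℕ → ℝ) (z : ℝ) :
    loopForm m a b (a m) 0 d g x z - (b m * x m + c * z) ^ 2 / e =
      loopForm m a b (a m - b m ^ 2 / e) (-(b m * c / e)) (d - c ^ 2 / e) g x z := by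
  simp only [loopForm]
  ring

theorem loopForm_mono (m : ℕ) (a b : ℕ → ℝ) {e e' d d' : ℝ} (he : e ≤ e') (hd : d ≤ d')
    (c g : ℝ) (x : ℕ → ℝ) (z : ℝ) :
    loopForm m a b e c d g x z ≤ loopForm m a b e' c d' g x z := by
  simp only [loopForm]
  gcongr

theorem loopForm_last_nonneg {m : ℕ} {a b : ℕ → ℝ} {e c d g : ℝ}
    (h : ∀ x z, 0 ≤ loopForm m a b e c d g x z) : 0 ≤ e ∧ 0 ≤ d := by
  constructor
  · have := h (fun i => if i = m then 1 else 0) 0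
    rw [loopForm, Finset.sum_eq_zero] at this
    · simpa using this
    · intro i hi
      have := Finset.mem_range.1 hi
      simp [this.ne]
  · simpa [loopForm] using h (fun _ => 0) 1

theorem loopForm_psiF_nonneg {α : ℝ} (hα : 1 ≤ α) (m : ℕ) (a b : ℕ → ℝ) (g : ℝ) :
    ∀ e c d : ℝ, (∀ x z, 0 ≤ loopForm (m + 1) a b e c d g x z) → ∀ x z,
      0 ≤ loopForm (m + 1) (fun i => psiF α (a i)) (fun i => psiF α (b i))
        (psiF α e) (psiF α c) (psiF α d) (psiF α g) x z := by
  induction m with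
  | zero =>
    intro e c d h x z
    have := ternary_psiF_nonneg hα (a := a 0) (b := b 0) (c := c) (d := d) (e := e) (g := g)
      (fun x y z => by
        have := h (fun i => if i = 0 then x else y) z
        simpa [loopForm] using this) (x 0) (x 1) z
    simpa [loopForm] using this
  | succ m ih =>
    intro e c d h x z
    have hc : ∀ x z, 0 ≤ e ∧ (e = 0 → b (m + 1) * x (m + 1) + c * z = 0) ∧
        0 ≤ loopForm (m + 1) a b (a (m + 1)) 0 d g x z -
          (b (m + 1) * x (m + 1) + c * z) ^ 2 / e := fun x z => by
      refine completion_nonneg fun t => ?_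
      have := h (fun i => if i = m + 1 + 1 then t else x i) z
      rw [loopForm_succ, loopForm_congr (y := x)] at this
      · simpa using this
      · intro i hi
        simp [show i ≠ m + 1 + 1 by omega]
    simp only [loopForm_sub_sq_div] at hc
    have he : 0 ≤ e := (hc 0 0).1
    have hb : e = 0 → b (m + 1) = 0 := fun h0 => by simpa using (hc (fun _ => 1) 0).2.1 h0
    have hc0 : e = 0 → c = 0 := fun h0 => by simpa using (hc 0 1).2.1 h0
    have hred := fun x z => (hc x z).2.2
    obtain ⟨he', hd'⟩ := loopForm_last_nonneg hred
    have hle : ∀ {u v : ℝ}, 0 ≤ u - v ^ 2 / e →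
        psiF α (u - v ^ 2 / e) ≤ psiF α u - psiF α v ^ 2 / psiF α e := fun {u v} huv => by
      have := psiF_add_le hα huv (by positivity : 0 ≤ v ^ 2 / e)
      rw [sub_add_cancel, psiF_div α (v ^ 2), sq v, psiF_mul, ← sq, ← sq] at this
      linarith
    rw [loopForm_succ]
    refine nonneg_of_completion (psiF_nonneg he) (fun h0 => ?_) ?_ _
    · have h0 : e = 0 := (psiF_eq_zero α e).1 h0
      simp [hb h0, hc0 h0, psiF_zero]
    · rw [loopForm_sub_sq_div]
      refine (ih _ _ _ hred x z).trans ?_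
      rw [psiF_neg, psiF_div, psiF_mul]
      exact loopForm_mono _ _ _ (hle he') (hle hd') _ _ _ _

/-- `G` is the cycle `0 — 1 — ⋯ — (k + 2) — 0`. -/
def IsCycleOn {k : ℕ} (G : SimpleGraph (Fin (k + 3))) : Prop :=
  ∀ i j, G.Adj i j ↔ j = i + 1 ∨ i = j + 1

theorem add_one_add_one_ne_self {k : ℕ} (i : Fin (k + 3)) : i + 1 + 1 ≠ i := by
  rw [add_assoc, Ne, add_eq_left]
  intro h
  have := congrArg Fin.val h
  rw [Fin.val_add, Fin.val_one, Fin.val_zero, Nat.mod_eq_of_lt (by omega)] at this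
  omega

/-- The quadratic form of a weighted cycle on `Fin (k + 3)`. -/
def cycleForm {k : ℕ} (a b x : Fin (k + 3) → ℝ) : ℝ :=
  ∑ i, (a i * x i ^ 2 + 2 * b i * x i * x (i + 1))

theorem dotProduct_mulVec_eq_cycleForm {k : ℕ} {A : Matrix (Fin (k + 3)) (Fin (k + 3)) ℝ}
    (hs : ∀ i j, A i j = A j i) (h0 : ∀ i j, i ≠ j → j ≠ i + 1 → i ≠ j + 1 → A i j = 0)
    (x : Fin (k + 3) → ℝ) :
    x ⬝ᵥ A *ᵥ x = cycleForm (fun i => A i i) (fun i => A i (i + 1)) x := by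
  have hrow : ∀ i, (A *ᵥ x) i =
      A i i * x i + A i (i + 1) * x (i + 1) + A i (i - 1) * x (i - 1) := fun i => by
    have h1 : i ≠ i + 1 := by simp
    have h2 : i ≠ i - 1 := by simp [eq_sub_iff_add_eq]
    have h3 : i + 1 ≠ i - 1 := fun h => add_one_add_one_ne_self i (by rw [h]; abel)
    rw [mulVec, dotProduct, ← Finset.sum_subset (Finset.subset_univ {i, i + 1, i - 1})]
    · rw [Finset.sum_insert (by simp [h2]), Finset.sum_insert (by simpa using h3),
        Finset.sum_singleton, add_assoc]
    · intro j _ hj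
      simp only [Finset.mem_insert, Finset.mem_singleton, not_or] at hj
      rw [h0 i j (Ne.symm hj.1) hj.2.1 fun h => hj.2.2 (by rw [h]; abel), zero_mul]
  have hshift : ∑ i, x i * (A i (i - 1) * x (i - 1)) = ∑ i, x (i + 1) * (A (i + 1) i * x i) := by
    rw [← Equiv.sum_comp (Equiv.addRight (1 : Fin (k + 3)))]
    simp
  simp only [dotProduct, hrow, mul_add, Finset.sum_add_distrib, hshift, cycleForm]
  rw [add_assoc, ← Finset.sum_add_distrib]
  congr 1
  · exact Finset.sum_congr rfl fun i _ => by ring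
  · exact Finset.sum_congr rfl fun i _ => by rw [hs (i + 1) i]; ring

theorem cycleForm_eq {k : ℕ} (a b x : Fin (k + 3) → ℝ) :
    cycleForm a b x =
      ∑ i : Fin (k + 2), (a i.castSucc * x i.castSucc ^ 2 +
        2 * b i.castSucc * x i.castSucc * x i.succ) +
      (a (Fin.last _) * x (Fin.last _) ^ 2 + 2 * b (Fin.last _) * x (Fin.last _) * x 0) := by
  rw [cycleForm, Fin.sum_univ_castSucc]
  simp [Fin.last_add_one]

theorem cycleForm_eq_loopForm {k : ℕ} (a b x : ℕ → ℝ) :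
    cycleForm (fun i : Fin (k + 3) => a i) (fun i => b i) (fun i => x i) =
      loopForm (k + 1) a b (a (k + 1)) (b (k + 1)) (a (k + 2)) (b (k + 2)) x (x (k + 2)) := by
  rw [cycleForm_eq, loopForm]
  simp only [Fin.val_castSucc, Fin.val_succ, Fin.val_last, Fin.val_zero]
  rw [Fin.sum_univ_eq_sum_range fun i => a i * x i ^ 2 + 2 * b i * x i * x (i + 1),
    Finset.sum_range_succ]
  ring

theorem cycleForm_psiF_nonneg {α : ℝ} (hα : 1 ≤ α) {k : ℕ} {a b : Fin (k + 3) → ℝ}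
    (h : ∀ x, 0 ≤ cycleForm a b x) (x : Fin (k + 3) → ℝ) :
    0 ≤ cycleForm (fun i => psiF α (a i)) (fun i => psiF α (b i)) x := by
  have hext : ∀ f : Fin (k + 3) → ℝ, ∃ f' : ℕ → ℝ, f = fun i : Fin (k + 3) => f' (i : ℕ) := fun f =>
    ⟨fun i => f (Fin.ofNat _ i), funext fun i => by simp⟩
  obtain ⟨a, rfl⟩ := hext a
  obtain ⟨b, rfl⟩ := hext b
  obtain ⟨x, rfl⟩ := hext x
  rw [cycleForm_eq_loopForm (fun i => psiF α (a i)) (fun i => psiF α (b i))]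
  refine loopForm_psiF_nonneg hα k a b _ _ _ _ (fun y z => ?_) x _
  have := h fun i => (fun j => if j = k + 2 then z else y j) (i : ℕ)
  rw [cycleForm_eq_loopForm a b fun j => if j = k + 2 then z else y j] at this
  simp only [if_true] at this
  rwa [loopForm_congr (y := y)] at this
  intro i hi
  simp [show i ≠ k + 2 by omega]

theorem posSemidef_iff_cycleForm {k : ℕ} {A : Matrix (Fin (k + 3)) (Fin (k + 3)) ℝ}
    (hs : ∀ i j, A i j = A j i) (h0 : ∀ i j, i ≠ j → j ≠ i + 1 → i ≠ j + 1 → A i j = 0) :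
    A.PosSemidef ↔ ∀ x, 0 ≤ cycleForm (fun i => A i i) (fun i => A i (i + 1)) x := by
  rw [posSemidef_iff_dotProduct_mulVec]
  simp only [star_trivial, dotProduct_mulVec_eq_cycleForm hs h0]
  exact and_iff_right (Matrix.IsHermitian.ext fun i j => by simpa using hs j i)

theorem mem_PsetG_iff {k : ℕ} {G : SimpleGraph (Fin (k + 3))} (hG : IsCycleOn G) {I : Set ℝ}
    {A : Matrix (Fin (k + 3)) (Fin (k + 3)) ℝ} :
    A ∈ PsetG G I ↔ (∀ i j, A i j = A j i) ∧ (∀ i j, A i j ∈ I) ∧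
      (∀ i j, i ≠ j → j ≠ i + 1 → i ≠ j + 1 → A i j = 0) ∧
      ∀ x, 0 ≤ cycleForm (fun i => A i i) (fun i => A i (i + 1)) x := by
  simp only [PsetG, mem_ofPred_eq, hG _ _, not_or, and_imp]
  constructor
  · rintro ⟨hA, hI, h0⟩
    have hs : ∀ i j, A i j = A j i := fun i j => by simpa using (hA.isHermitian.apply i j).symm
    exact ⟨hs, hI, h0, (posSemidef_iff_cycleForm hs h0).1 hA⟩
  · rintro ⟨hs, hI, h0, hA⟩
    exact ⟨(posSemidef_iff_cycleForm hs h0).2 hA, hI, h0⟩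

theorem Ici_subset_HsetPsi {k : ℕ} {G : SimpleGraph (Fin (k + 3))} (hG : IsCycleOn G) :
    Ici 1 ⊆ HsetPsi G := by
  intro α hα A hA
  obtain ⟨hs, -, h0, hA⟩ := (mem_PsetG_iff hG).1 hA
  refine (mem_PsetG_iff hG).2 ⟨fun i j => ?_, fun _ _ => mem_univ _, fun i j h1 h2 h3 => ?_,
    cycleForm_psiF_nonneg hα hA⟩
  · rw [map_apply, map_apply, hs]
  · rw [map_apply, h0 i j h1 h2 h3, psiF_zero]

theorem HsetPsi_subset_HsetG {V : Type*} [Fintype V] (G : SimpleGraph V) :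
    HsetPsi G ⊆ HsetG G := by
  intro α hα A hA
  have h : A.map (powEnt α) = A.map (psiF α) := by
    ext i j
    have : 0 ≤ A i j := hA.2.1 i j
    rcases this.eq_or_lt with h | h
    · simp [powEnt, psiF, ← h]
    · simp [powEnt, psiF, h.ne', Real.sign_of_pos h, abs_of_pos h]
  rw [h]
  exact hα A ⟨hA.1, fun _ _ => mem_univ _, hA.2.2⟩

theorem HsetPhi_subset_HsetG {V : Type*} [Fintype V] (G : SimpleGraph V) :
    HsetPhi G ⊆ HsetG G := by
  intro α hα A hA
  have h : A.map (powEnt α) = A.map (phiF α) := by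
    ext i j
    have : 0 ≤ A i j := hA.2.1 i j
    simp [powEnt, phiF, abs_of_nonneg this]
  rw [h]
  exact hα A ⟨hA.1, fun _ _ => mem_univ _, hA.2.2⟩

theorem mem_HsetPhi_of_half_mem_HsetG {V : Type*} [Fintype V] {G : SimpleGraph V} {α : ℝ}
    (hα : α / 2 ∈ HsetG G) : α ∈ HsetPhi G := by
  intro A hA
  have h : A.map (phiF α) = (A ⊙ A).map (powEnt (α / 2)) := by
    ext i j
    by_cases h : A i j = 0
    · simp [powEnt, phiF, h]
    · simp only [map_apply, phiF, h, powEnt, hadamard_apply, mul_self_eq_zero, if_false]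
      rw [← abs_mul_abs_self, ← sq, ← Real.rpow_natCast, ← Real.rpow_mul (abs_nonneg _)]
      congr 1
      push_cast
      ring
  rw [h]
  exact hα _ ⟨hA.1.hadamard hA.1, fun i j => mul_self_nonneg (A i j), fun i j h1 h2 => by
    simp [hA.2.2 i j h1 h2]⟩

/-- The weighted adjacency matrix of a cycle with diagonal `a` and edge weights `b`. -/
def cycleMat {k : ℕ} (a b : Fin (k + 3) → ℝ) : Matrix (Fin (k + 3)) (Fin (k + 3)) ℝ :=
  of fun i j => if i = j then a i else if j = i + 1 then b i else if i = j + 1 then b j else 0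

theorem cycleMat_map {k : ℕ} (a b : Fin (k + 3) → ℝ) {f : ℝ → ℝ} (hf : f 0 = 0) :
    (cycleMat a b).map f = cycleMat (fun i => f (a i)) fun i => f (b i) := by
  ext i j
  simp only [cycleMat, map_apply, of_apply]
  split_ifs <;> simp [hf]

theorem cycleMat_mem_PsetG_iff {k : ℕ} {G : SimpleGraph (Fin (k + 3))} (hG : IsCycleOn G)
    {I : Set ℝ} (hI : 0 ∈ I) {a b : Fin (k + 3) → ℝ} (ha : ∀ i, a i ∈ I) (hb : ∀ i, b i ∈ I) :
    cycleMat a b ∈ PsetG G I ↔ ∀ x, 0 ≤ cycleForm a b x := by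
  have hd : (fun i => cycleMat a b i i) = a := by ext i; simp [cycleMat]
  have he : (fun i => cycleMat a b i (i + 1)) = b := by ext i; simp [cycleMat]
  rw [mem_PsetG_iff hG, hd, he]
  refine ⟨fun h => h.2.2.2, fun h => ⟨fun i j => ?_, fun i j => ?_, fun i j h1 h2 h3 => ?_, h⟩⟩
  · simp only [cycleMat, of_apply]
    rcases eq_or_ne i j with rfl | h1
    · rfl
    rw [if_neg h1, if_neg h1.symm]
    by_cases h2 : j = i + 1
    · have h3 : i ≠ j + 1 := fun h3 => add_one_add_one_ne_self i (by rw [← h2, ← h3])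
      rw [if_pos h2, if_neg h3, if_pos h2]
    · rw [if_neg h2, if_neg h2]
  · simp only [cycleMat, of_apply]
    split_ifs <;> simp [*]
  · simp [cycleMat, h1, h2, h3]

theorem HsetG_subset_Ici {k : ℕ} {G : SimpleGraph (Fin (k + 3))} (hG : IsCycleOn G) :
    HsetG G ⊆ Ici 1 := by
  intro α hα
  let a : Fin (k + 3) → ℝ := Fin.cons 1 (Fin.cons 2 (Fin.cons 1 0))
  let b : Fin (k + 3) → ℝ := Fin.cons 1 (Fin.cons 1 (Fin.cons 0 0))
  have hform : ∀ f : ℝ → ℝ, f 0 = 0 → ∀ u v w : ℝ, ∀ r : Fin k → ℝ,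
      cycleForm (fun i => f (a i)) (fun i => f (b i)) (Fin.cons u (Fin.cons v (Fin.cons w r))) =
        f 1 * u ^ 2 + 2 * f 1 * u * v + f 2 * v ^ 2 + 2 * f 1 * v * w + f 1 * w ^ 2 := by
    intro f hf u v w r
    have h1 : (0 : Fin (k + 3)) + 1 = Fin.succ 0 := by simp
    have h2 : Fin.succ (0 : Fin (k + 2)) + 1 = Fin.succ (Fin.succ 0) := by
      ext
      rw [Fin.val_add, Fin.val_one, Fin.val_succ, Fin.val_succ, Fin.val_succ, Fin.val_zero,
        Fin.val_zero, Nat.mod_eq_of_lt (by omega)]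
    rw [cycleForm, Fin.sum_univ_succ, Fin.sum_univ_succ, Fin.sum_univ_succ, h1, h2]
    simp only [a, b, Fin.cons_zero, Fin.cons_succ, Pi.zero_apply, hf, mul_zero, zero_mul, add_zero,
      Finset.sum_const_zero]
    ring
  have hmem : cycleMat a b ∈ PsetG G (Ici 0) := by
    refine (cycleMat_mem_PsetG_iff hG self_mem_Ici (fun i => ?_) fun i => ?_).2 fun x => ?_
    · refine Fin.cases ?_ (Fin.cases ?_ (Fin.cases ?_ fun i => ?_)) i <;>
        simp only [a, Fin.cons_zero, Fin.cons_succ, mem_Ici, Pi.zero_apply] <;> norm_num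
    · refine Fin.cases ?_ (Fin.cases ?_ (Fin.cases ?_ fun i => ?_)) i <;>
        simp only [b, Fin.cons_zero, Fin.cons_succ, mem_Ici, Pi.zero_apply] <;> norm_num
    · obtain ⟨u, x, rfl⟩ : ∃ u y, x = Fin.cons u y := ⟨_, _, (Fin.cons_self_tail x).symm⟩
      obtain ⟨v, x, rfl⟩ : ∃ u y, x = Fin.cons u y := ⟨_, _, (Fin.cons_self_tail x).symm⟩
      obtain ⟨w, x, rfl⟩ : ∃ u y, x = Fin.cons u y := ⟨_, _, (Fin.cons_self_tail x).symm⟩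
      have := hform id rfl u v w x
      simp only [id] at this
      rw [this]
      linarith [sq_nonneg (u + v), sq_nonneg (v + w)]
  have h0 : powEnt α 0 = 0 := if_pos rfl
  have h := hα _ hmem
  rw [cycleMat_map _ _ h0, cycleMat_mem_PsetG_iff hG (mem_univ _) (fun _ => mem_univ _)
    fun _ => mem_univ _] at h
  have h := h (Fin.cons 1 (Fin.cons (-1) (Fin.cons 1 0)))
  rw [hform _ h0] at h
  have h2 : (2 : ℝ) ^ (1 : ℝ) ≤ 2 ^ α := by
    simp only [powEnt, one_ne_zero, two_ne_zero, if_false, Real.one_rpow] at h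
    rw [Real.rpow_one]
    linarith
  exact (Real.rpow_le_rpow_left_iff one_lt_two).1 h2

theorem HsetPhi_subset_Ici_two {G : SimpleGraph (Fin 4)} (hG : IsCycleOn (k := 1) G) :
    HsetPhi G ⊆ Ici 2 := by
  intro α hα
  have hs : √2 * √2 = (2 : ℝ) := Real.mul_self_sqrt zero_le_two
  have hs0 : 0 < √2 := Real.sqrt_pos.2 two_pos
  have hmem : cycleMat (k := 1) (fun _ => √2) ![1, 1, 1, -1] ∈ PsetG G univ := by
    refine (cycleMat_mem_PsetG_iff hG (mem_univ _) (fun _ => mem_univ _) fun _ => mem_univ _).2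
      fun x => ?_
    have : cycleForm (k := 1) (fun _ => √2) ![1, 1, 1, -1] x =
        (√2 / 2) * ((√2 * x 1 + x 0 + x 2) ^ 2 + (√2 * x 3 + x 2 - x 0) ^ 2) := by
      have e0 : (3 : Fin 4) + 1 = 0 := rfl
      have e1 : (2 : Fin 4) + 1 = 3 := rfl
      have e2 : (1 : Fin 4) + 1 = 2 := rfl
      simp only [cycleForm, Nat.reduceAdd, Fin.sum_univ_four, e0, e1, e2, zero_add]
      simp only [Matrix.cons_val]
      linear_combination (-(x 1 * (x 0 + x 2)) - x 3 * (x 2 - x 0) -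
        √2 / 2 * (x 1 ^ 2 + x 3 ^ 2)) * hs
    rw [this]
    positivity
  have h0 : phiF α 0 = 0 := if_pos rfl
  have h := hα _ hmem
  rw [cycleMat_map _ _ h0, cycleMat_mem_PsetG_iff hG (mem_univ _) (fun _ => mem_univ _)
    fun _ => mem_univ _] at h
  have h := h ![1, -1, 1, -1]
  have h2 : (2 : ℝ) ^ (1 : ℝ) ≤ 2 ^ (α / 2) := by
    have e1 : phiF α √2 = 2 ^ (α / 2) := by
      rw [phiF, if_neg hs0.ne', abs_of_pos hs0, Real.sqrt_eq_rpow, ← Real.rpow_mul zero_le_two]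
      congr 1
      ring
    have e2 : phiF α 1 = 1 := by simp [phiF]
    have e3 : phiF α (-1) = 1 := by simp [phiF]
    simp [cycleForm, Fin.sum_univ_four, e1, e2, e3] at h
    rw [Real.rpow_one]
    linarith
  have := (Real.rpow_le_rpow_left_iff one_lt_two).1 h2
  rw [mem_Ici]
  linarith

theorem one_notMem_HsetPhi {k : ℕ} {G : SimpleGraph (Fin (k + 3))} (hG : IsCycleOn G)
    (hk : Even (k + 3)) : 1 ∉ HsetPhi G := by
  intro hα
  have hk0 : (0 : ℝ) < k + 3 := by positivity
  let ε : ℝ := 4 / (k + 3)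
  have hε : 0 < ε := by positivity
  have hε2 : ε < 2 := by
    rw [div_lt_iff₀ hk0]
    linarith [(Nat.cast_nonneg k : (0 : ℝ) ≤ k)]
  let a : Fin (k + 3) → ℝ := fun i => 2 - if i = 0 then ε else 0
  have hform : ∀ (t u : ℝ) (x : Fin (k + 3) → ℝ),
      cycleForm a (Fin.snoc (α := fun _ => ℝ) (fun _ => t) u) x =
        ∑ i : Fin (k + 2), (x i.castSucc ^ 2 + 2 * t * x i.castSucc * x i.succ + x i.succ ^ 2) +
          (x (Fin.last _) ^ 2 + 2 * u * x (Fin.last _) * x 0 + x 0 ^ 2) - ε * x 0 ^ 2 := by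
    intro t u x
    have h1 : ∑ i, a i * x i ^ 2 = ∑ i, x i ^ 2 + ∑ i, x i ^ 2 - ε * x 0 ^ 2 := by
      simp [a, sub_mul, Finset.sum_sub_distrib, two_mul, Finset.sum_add_distrib]
    have h2 := Fin.sum_univ_castSucc fun i => x i ^ 2
    have h3 := Fin.sum_univ_succ fun i => x i ^ 2
    rw [cycleForm, Finset.sum_add_distrib, h1, h2, Fin.sum_univ_castSucc (n := k + 2)]
    simp only [Fin.snoc_castSucc, Fin.snoc_last, Fin.last_add_one, Fin.coeSucc_eq_succ,
      Finset.sum_add_distrib]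
    linarith
  have hmem : cycleMat a (Fin.snoc (α := fun _ => ℝ) (fun _ => -1) 1) ∈ PsetG G univ := by
    refine (cycleMat_mem_PsetG_iff hG (mem_univ _) (fun _ => mem_univ _) fun _ => mem_univ _).2
      fun x => ?_
    rw [hform]
    let w : Fin (k + 3) → ℝ :=
      Fin.snoc (α := fun _ => ℝ) (fun i => x i.castSucc - x i.succ) (x (Fin.last _) + x 0)
    have hsum : ∑ i, w i = 2 * x 0 := by
      have h1 := Fin.sum_univ_castSucc x
      rw [Fin.sum_univ_succ] at h1
      rw [Fin.sum_univ_castSucc]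
      simp only [w, Fin.snoc_castSucc, Fin.snoc_last, Finset.sum_sub_distrib]
      linarith
    have hsq : ∑ i, w i ^ 2 = ∑ i : Fin (k + 2), (x i.castSucc ^ 2 +
        2 * -1 * x i.castSucc * x i.succ + x i.succ ^ 2) +
          (x (Fin.last _) ^ 2 + 2 * 1 * x (Fin.last _) * x 0 + x 0 ^ 2) := by
      rw [Fin.sum_univ_castSucc]
      simp only [w, Fin.snoc_castSucc, Fin.snoc_last]
      congr 1
      · exact Finset.sum_congr rfl fun i _ => by ring
      · ring
    have hcs := sq_sum_le_card_mul_sum_sq (s := Finset.univ) (f := w)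
    rw [hsum, Finset.card_univ, Fintype.card_fin] at hcs
    push_cast at hcs
    rw [← hsq, sub_nonneg, div_mul_eq_mul_div, div_le_iff₀ hk0]
    linarith
  have h0 : phiF 1 0 = 0 := if_pos rfl
  have h := hα _ hmem
  have ha : (fun i => phiF 1 (a i)) = a := by
    ext i
    have : 0 < a i := by
      simp only [a]
      split_ifs <;> linarith
    rw [phiF, if_neg this.ne', Real.rpow_one, abs_of_pos this]
  have hb : (fun i => phiF 1 (Fin.snoc (α := fun _ => ℝ) (fun _ : Fin (k + 2) => -1) 1 i)) =
      Fin.snoc (α := fun _ => ℝ) (fun _ => 1) 1 := by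
    ext i
    refine Fin.lastCases ?_ (fun i => ?_) i <;> simp [phiF]
  rw [cycleMat_map _ _ h0, cycleMat_mem_PsetG_iff hG (mem_univ _) (fun _ => mem_univ _)
    fun _ => mem_univ _, ha, hb] at h
  have h := h fun i => (-1) ^ (i : ℕ)
  have hlast : (-1 : ℝ) ^ (k + 2) = -1 := Odd.neg_one_pow (by grind)
  rw [hform, Finset.sum_eq_zero] at h
  · simp only [Fin.val_last, Fin.val_zero, hlast] at h
    linarith
  · intro i _
    simp only [Fin.val_castSucc, Fin.val_succ, pow_succ]
    ring

/-- **Proposition 4.3 (cycles)**: for every cycle graph `C_n` (`n ≥ 3`, adjacency: difference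
`±1 mod n`), `H_{C_n} = H_{C_n}^ψ = [1,∞)` and `H_{C_4}^φ = [2,∞)`; moreover for `n > 4`,
`[2,∞) ⊆ H_{C_n}^φ ⊆ [1,∞)`, with `1 ∉ H_{C_n}^φ` when `n` is even. -/
theorem Hsets_cycles :
    ∀ (n : ℕ), 3 ≤ n → ∀ G : SimpleGraph (Fin n),
      (∀ i j : Fin n, G.Adj i j ↔ i ≠ j ∧
        (((i : ℕ) : ZMod n) - ((j : ℕ) : ZMod n) = 1 ∨
         ((j : ℕ) : ZMod n) - ((i : ℕ) : ZMod n) = 1)) →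
      (HsetG G = Ici (1 : ℝ) ∧ HsetPsi G = Ici (1 : ℝ)) ∧
      (n = 4 → HsetPhi G = Ici (2 : ℝ)) ∧
      (4 < n → Ici (2 : ℝ) ⊆ HsetPhi G ∧ HsetPhi G ⊆ Ici (1 : ℝ) ∧
        (Even n → (1 : ℝ) ∉ HsetPhi G)) := by
  intro n hn G hG
  obtain ⟨k, rfl⟩ : ∃ k, n = k + 3 := ⟨n - 3, by omega⟩
  have hG : IsCycleOn G := fun i j => by
    have hcast : ∀ i : Fin (k + 3), ((i : ℕ) : ZMod (k + 3)) = (i : Fin (k + 3)) := fun i =>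
      Fin.cast_val_eq_self i
    have hsub : ∀ i j : Fin (k + 3),
        ((i : ℕ) : ZMod (k + 3)) - ((j : ℕ) : ZMod (k + 3)) = 1 ↔ i = j + 1 := fun i j => by
      rw [hcast, hcast]
      exact sub_eq_iff_eq_add'
    rw [hG, hsub, hsub, or_comm]
    refine and_iff_right_of_imp ?_
    rintro h rfl
    simp at h
  have hG1 : HsetG G = Ici 1 := (HsetG_subset_Ici hG).antisymm
    ((Ici_subset_HsetPsi hG).trans (HsetPsi_subset_HsetG G))
  have hphi : Ici 2 ⊆ HsetPhi G := fun α hα => mem_HsetPhi_of_half_mem_HsetG (by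
    rw [hG1, mem_Ici]
    linarith [mem_Ici.1 hα])
  refine ⟨⟨hG1, (hG1 ▸ HsetPsi_subset_HsetG G).antisymm (Ici_subset_HsetPsi hG)⟩, fun h4 => ?_,
    fun _ => ⟨hphi, hG1 ▸ HsetPhi_subset_HsetG G, one_notMem_HsetPhi hG⟩⟩
  obtain rfl : k = 1 := by omega
  exact (HsetPhi_subset_Ici_two hG).antisymm hphi
end
end
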